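/- Let m ≥ 1 be an integer. The operator □^m is a bounded isomorphism from H²(T_{Λ₃}) onto the Bergman space A²_{2m}(T_{Λ₃}): there is a constant c_m > 0 such that for every F ∈ H²(T_{Λ₃}) one has □^m F ∈ A²_{2m}(T_{Λ₃}) with ‖□^m F‖²_{A²_{2m}} = c_m ‖F‖²_{H²}, and conversely every G ∈ A²_{2m}(T_{Λ₃}) equals a constant multiple of □^m F for some F ∈ H²(T_{Λ₃}). -/

import Mathlib

open MeasureTheory Set
open scoped ENNReal NNReal

noncomputable section

/-- The Lorentz cone `Λ₃ = {y ∈ ℝ³ : y₁ + y₂ > 0, y₁² − y₂² − y₃² > 0}`. -/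
def Lambda3 : Set (Fin 3 → ℝ) :=
  {y | 0 < y 0 + y 1 ∧ 0 < (y 0) ^ 2 - (y 1) ^ 2 - (y 2) ^ 2}

/-- The tube domain `T_{Λ₃} = ℝ³ + iΛ₃ ⊂ ℂ³`. -/
def TLambda3 : Set (Fin 3 → ℂ) :=
  {z | (fun i => (z i).im) ∈ Lambda3}

/-- The determinant function of the Lorentz cone: `Δ(y) = y₁² − y₂² − y₃²`. -/
def DeltaL (y : Fin 3 → ℝ) : ℝ := (y 0) ^ 2 - (y 1) ^ 2 - (y 2) ^ 2

/-- Square of the Hardy space `H²(T_{Λ₃})` norm. -/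
def hardyNormSq (F : (Fin 3 → ℂ) → ℂ) : ℝ≥0∞ :=
  ⨆ y ∈ Lambda3,
    ∫⁻ x : Fin 3 → ℝ, (‖F (fun i => (x i : ℂ) + (y i : ℂ) * Complex.I)‖₊ : ℝ≥0∞) ^ 2

/-- Square of the weighted Bergman space `A²_ν(T_{Λ₃})` norm:
`‖G‖² = ∫_{Λ₃} ∫_{ℝ³} |G(x+iy)|² Δ(y)^{ν−3/2} dx dy`. -/
def bergNormSqTube (ν : ℝ) (G : (Fin 3 → ℂ) → ℂ) : ℝ≥0∞ :=
  ∫⁻ y in Lambda3,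
    (∫⁻ x : Fin 3 → ℝ, (‖G (fun i => (x i : ℂ) + (y i : ℂ) * Complex.I)‖₊ : ℝ≥0∞) ^ 2)
      * ENNReal.ofReal (DeltaL y ^ (ν - 3 / 2))

/-- Partial derivative in the `i`-th complex coordinate. -/
def pd (i : Fin 3) (F : (Fin 3 → ℂ) → ℂ) : (Fin 3 → ℂ) → ℂ :=
  fun z => fderiv ℂ F z (Pi.single i 1)

/-- The box operator `□ = −∂²/∂z₁² + ∂²/∂z₂² + ∂²/∂z₃²` associated to the Lorentz cone. -/
def Box (F : (Fin 3 → ℂ) → ℂ) : (Fin 3 → ℂ) → ℂ :=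
  fun z => - pd 0 (pd 0 F) z + pd 1 (pd 1 F) z + pd 2 (pd 2 F) z

section FourierPackage
open FourierTransform SchwartzMap ComplexInnerProductSpace

theorem fourierInvL2_eq {V : Type*} [NormedAddCommGroup V] [InnerProductSpace ℝ V]
    [FiniteDimensional ℝ V] [MeasurableSpace V] [BorelSpace V]
    (f : V → ℂ) (h1 : Integrable f) (h2 : MemLp f 2) :
    ((𝓕⁻ (h2.toLp f) : Lp (α := V) ℂ 2 volume) : V → ℂ) =ᵐ[volume] (𝓕⁻ f : V → ℂ) := by
  have hcont : Continuous (𝓕⁻ f : V → ℂ) := by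
    have : (𝓕⁻ f : V → ℂ) = fun x => 𝓕 f (-x) := by
      ext x; exact Real.fourierInv_eq_fourier_neg f x
    rw [this]
    exact (VectorFourier.fourierIntegral_continuous Real.continuous_fourierChar
      continuous_inner h1).comp continuous_neg
  apply ae_eq_of_integral_contDiff_smul_eq
  · exact (Lp.memLp _).locallyIntegrable (by norm_num)
  · exact hcont.locallyIntegrable
  intro g hg gc
  have hg₁ : HasCompactSupport (Complex.ofRealCLM ∘ g) := gc.comp_left rfl
  have hg₂ : ContDiff ℝ (⊤ : ℕ∞) (Complex.ofRealCLM ∘ g) := by fun_prop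
  have key := congrArg (fun T => T (hg₁.toSchwartzMap hg₂))
    (Lp.fourierInv_toTemperedDistribution_eq (h2.toLp f))
  simp only [TemperedDistribution.fourierInv_apply, Lp.toTemperedDistribution_apply] at key
  have e1 : ∫ x, g x • (𝓕⁻ (h2.toLp f) : Lp (α := V) ℂ 2 volume) x ∂volume =
      ∫ x, (hg₁.toSchwartzMap hg₂) x • (𝓕⁻ (h2.toLp f) : Lp (α := V) ℂ 2 volume) x := by
    apply integral_congr_ae; filter_upwards with x; simp
  have e2 : ∫ x, g x • (𝓕⁻ f : V → ℂ) x =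
      ∫ x, (hg₁.toSchwartzMap hg₂) x • (𝓕⁻ f : V → ℂ) x := by
    apply integral_congr_ae; filter_upwards with x; simp
  rw [e1, e2, ← key]
  have e3 : ∫ x, (𝓕⁻ (hg₁.toSchwartzMap hg₂)) x • (h2.toLp f) x =
     ∫ x, (𝓕⁻ (hg₁.toSchwartzMap hg₂)) x • f x := by
    apply integral_congr_ae
    filter_upwards [h2.coeFn_toLp] with x hx
    rw [hx]
  rw [e3, fourierInv_coe]
  have := VectorFourier.integral_fourierIntegral_smul_eq_flip (L := -innerₗ V) (μ := volume)
    (ν := volume) (f := (hg₁.toSchwartzMap hg₂)) (g := f)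
      Real.continuous_fourierChar (by simp only [LinearMap.neg_apply]; exact continuous_inner.neg) (hg₁.toSchwartzMap hg₂).integrable h1
  have hfl : (-innerₗ V).flip = -innerₗ V := by
    ext x y; simp [real_inner_comm]
  rw [hfl] at this
  exact this


theorem eLpNorm_two_sq {α : Type*} [MeasurableSpace α] {μ : Measure α} (f : α → ℂ) :
    eLpNorm f 2 μ ^ 2 = ∫⁻ x, ‖f x‖ₑ ^ 2 ∂μ := by
  have := eLpNorm_nnreal_pow_eq_lintegral (μ := μ) (f := f) (p := (2 : ℝ≥0)) (by norm_num)
  norm_num at this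
  exact this

theorem fourierInv_plancherel_V {V : Type*} [NormedAddCommGroup V] [InnerProductSpace ℝ V]
    [FiniteDimensional ℝ V] [MeasurableSpace V] [BorelSpace V]
    (f : V → ℂ) (h1 : Integrable f) (h2 : MemLp f 2) :
    MemLp (𝓕⁻ f : V → ℂ) 2 ∧ ∫⁻ x, ‖(𝓕⁻ f : V → ℂ) x‖ₑ ^ 2 = ∫⁻ x, ‖f x‖ₑ ^ 2 := by
  have h := fourierInvL2_eq f h1 h2
  refine ⟨(memLp_congr_ae h).1 (Lp.memLp _), ?_⟩
  rw [← eLpNorm_two_sq, ← eLpNorm_two_sq, ← eLpNorm_congr_ae h]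
  congr 1
  have e1 : ‖(𝓕⁻ (h2.toLp f) : Lp (α := V) ℂ 2 volume)‖ₑ = ‖h2.toLp f‖ₑ := by
    have : ‖(𝓕⁻ (h2.toLp f) : Lp (α := V) ℂ 2 volume)‖ = ‖h2.toLp f‖ :=
      (Lp.fourierTransformₗᵢ V ℂ).symm.norm_map _
    rw [← ofReal_norm, ← ofReal_norm, this]
  rw [Lp.enorm_def, Lp.enorm_def] at e1
  rw [e1, eLpNorm_congr_ae h2.coeFn_toLp]

theorem fourier_package_V {V : Type*} [NormedAddCommGroup V] [InnerProductSpace ℝ V]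
    [FiniteDimensional ℝ V] [MeasurableSpace V] [BorelSpace V]
    (f : V → ℂ) (h2 : MemLp f 2) :
    ∃ fh : V → ℂ, MemLp fh 2 ∧ ∫⁻ x, ‖fh x‖ₑ ^ 2 = ∫⁻ x, ‖f x‖ₑ ^ 2 ∧
      (∀ ψ : V → ℂ, Integrable ψ → MemLp ψ 2 →
        ∫ x, fh x * ψ x = ∫ x, f x * (starRingEnd ℂ) ((𝓕⁻ (fun y => (starRingEnd ℂ) (ψ y)) : V → ℂ) x)) ∧
      (Integrable fh → f =ᵐ[volume] (𝓕⁻ fh : V → ℂ)) := by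
  set Q : Lp (α := V) ℂ 2 volume := 𝓕 (h2.toLp f) with hQ
  refine ⟨Q, Lp.memLp _, ?_, ?_, ?_⟩
  · rw [← eLpNorm_two_sq, ← eLpNorm_two_sq]
    congr 1
    have e1 : ‖Q‖ₑ = ‖h2.toLp f‖ₑ := by
      have : ‖Q‖ = ‖h2.toLp f‖ := Lp.norm_fourier_eq _
      rw [← ofReal_norm, ← ofReal_norm, this]
    rw [Lp.enorm_def, Lp.enorm_def] at e1
    rw [e1, eLpNorm_congr_ae h2.coeFn_toLp]
  · intro ψ p1 p2
    have c1 : Integrable (fun y => (starRingEnd ℂ) (ψ y)) := by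
      refine p1.norm.mono' (Complex.continuous_conj.comp_aestronglyMeasurable p1.1) ?_
      filter_upwards with x; simp
    have c2 : MemLp (fun y => (starRingEnd ℂ) (ψ y)) 2 := by
      refine p2.of_le (Complex.continuous_conj.comp_aestronglyMeasurable p1.1) ?_
      filter_upwards with x; simp
    have k := fourierInvL2_eq _ c1 c2
    have inn : ⟪(𝓕⁻ (c2.toLp _) : Lp (α := V) ℂ 2 volume), h2.toLp f⟫ = ⟪c2.toLp _, Q⟫ := by
      rw [← Lp.inner_fourier_eq, fourier_fourierInv_eq]
    rw [L2.inner_def, L2.inner_def] at inn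
    calc _ = ∫ a, ⟪(c2.toLp _) a, Q a⟫ := by
          apply integral_congr_ae
          filter_upwards [c2.coeFn_toLp] with x hx
          rw [hx]; simp
      _ = _ := inn.symm
      _ = _ := by
          apply integral_congr_ae
          filter_upwards [k, h2.coeFn_toLp] with x hx hx2
          rw [hx, hx2]; simp
  · intro hi
    have := fourierInvL2_eq _ hi (Lp.memLp Q)
    rw [Lp.toLp_coeFn, hQ, fourierInv_fourier_eq] at this
    exact h2.coeFn_toLp.symm.trans this

end FourierPackage

/-- real pairing -/
noncomputable def ip (x ξ : Fin 3 → ℝ) : ℝ := x 0 * ξ 0 + x 1 * ξ 1 + x 2 * ξ 2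

/-- complex pairing -/
noncomputable def cip (z : Fin 3 → ℂ) (ξ : Fin 3 → ℝ) : ℂ := z 0 * ξ 0 + z 1 * ξ 1 + z 2 * ξ 2

/-- the inverse Fourier transform on `Fin 3 → ℝ` -/
noncomputable def invF (g : (Fin 3 → ℝ) → ℂ) (x : Fin 3 → ℝ) : ℂ :=
  ∫ ξ, g ξ * Complex.exp (2 * Real.pi * Complex.I * ip x ξ)

open FourierTransform in
theorem invF_eq (g : (Fin 3 → ℝ) → ℂ) (x : EuclideanSpace ℝ (Fin 3)) :
    invF g (WithLp.ofLp x) =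
      (𝓕⁻ (fun y : EuclideanSpace ℝ (Fin 3) => g (WithLp.ofLp y)) : EuclideanSpace ℝ (Fin 3) → ℂ) x := by
  rw [Real.fourierInv_eq, invF, ← (PiLp.volume_preserving_ofLp (Fin 3)).integral_comp
    (MeasurableEquiv.toLp 2 (Fin 3 → ℝ)).symm.measurableEmbedding]
  congr 1; ext v
  rw [Circle.smul_def, Real.fourierChar_apply, smul_eq_mul, mul_comm]
  congr 2
  simp [ip, PiLp.inner_apply, Fin.sum_univ_three]
  ring

theorem plancherel_P (g : (Fin 3 → ℝ) → ℂ) (h1 : Integrable g) (h2 : MemLp g 2) :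
    MemLp (invF g) 2 ∧ ∫⁻ x, ‖invF g x‖ₑ ^ 2 = ∫⁻ x, ‖g x‖ₑ ^ 2 := by
  have mp := PiLp.volume_preserving_ofLp (Fin 3)
  have me := (MeasurableEquiv.toLp 2 (Fin 3 → ℝ)).symm.measurableEmbedding
  have := fourierInv_plancherel_V (fun y : EuclideanSpace ℝ (Fin 3) => g (WithLp.ofLp y))
    (mp.integrable_comp_of_integrable h1) (h2.comp_measurePreserving mp)
  have e : (fun x : EuclideanSpace ℝ (Fin 3) => invF g (WithLp.ofLp x)) = _ :=
    funext (invF_eq g)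
  rw [← e] at this
  refine ⟨?_, ?_⟩
  · have h3 := (this.1).comp_measurePreserving (PiLp.volume_preserving_toLp (Fin 3))
    exact h3
  · have h3 := this.2
    rw [mp.lintegral_comp_emb me (fun x => ‖invF g x‖ₑ ^ 2), mp.lintegral_comp_emb me (fun x => ‖g x‖ₑ ^ 2)] at h3
    exact h3

theorem fourier_package (f : (Fin 3 → ℝ) → ℂ) (h2 : MemLp f 2) :
    ∃ fh : (Fin 3 → ℝ) → ℂ, MemLp fh 2 ∧ ∫⁻ x, ‖fh x‖ₑ ^ 2 = ∫⁻ x, ‖f x‖ₑ ^ 2 ∧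
      (∀ ψ : (Fin 3 → ℝ) → ℂ, Integrable ψ → MemLp ψ 2 →
        ∫ x, fh x * ψ x = ∫ x, f x * ∫ ξ, ψ ξ * Complex.exp (-(2 * Real.pi * Complex.I * ip x ξ))) ∧
      (Integrable fh → f =ᵐ[volume] invF fh) := by
  have mp := PiLp.volume_preserving_ofLp (Fin 3)
  have mp' := PiLp.volume_preserving_toLp (Fin 3)
  have me := (MeasurableEquiv.toLp 2 (Fin 3 → ℝ)).symm.measurableEmbedding
  have me' := (MeasurableEquiv.toLp 2 (Fin 3 → ℝ)).measurableEmbedding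
  obtain ⟨fh, a1, a2, a3, a4⟩ := fourier_package_V
    (fun y : EuclideanSpace ℝ (Fin 3) => f (WithLp.ofLp y)) (h2.comp_measurePreserving mp)
  refine ⟨fun x => fh (WithLp.toLp 2 x), a1.comp_measurePreserving mp', ?_, ?_, ?_⟩
  · rw [mp.lintegral_comp_emb me (fun x => ‖f x‖ₑ ^ 2)] at a2
    rw [← a2]
    exact mp'.lintegral_comp_emb me' (fun x => ‖fh x‖ₑ ^ 2)
  · intro ψ p1 p2
    have := a3 (fun y => ψ (WithLp.ofLp y)) (mp.integrable_comp_of_integrable p1)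
      (p2.comp_measurePreserving mp)
    rw [← mp'.integral_comp me', ← mp'.integral_comp me'] at this
    refine this.trans ?_
    congr 1; ext x
    congr 1
    rw [← invF_eq (fun y => (starRingEnd ℂ) (ψ y)), invF, ← integral_conj]
    congr 1; ext ξ
    simp only [map_mul, Complex.conj_conj, ← Complex.exp_conj]
    congr 2
    simp [Complex.conj_ofNat]
  · intro hi
    have h3 := a4 (by
      have := mp.integrable_comp_of_integrable hi
      exact this)
    have h4 := mp'.quasiMeasurePreserving.ae h3
    filter_upwards [h4] with x hx
    have := invF_eq (fun x => fh (WithLp.toLp 2 x)) (WithLp.toLp 2 x)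
    simp only at this hx
    rw [this, hx]

/-- the point `x + i y` of the tube -/
def tp (x y : Fin 3 → ℝ) : Fin 3 → ℂ := fun i => (x i : ℂ) + (y i : ℂ) * Complex.I

theorem L3_pos {y : Fin 3 → ℝ} (h : y ∈ Lambda3) :
    0 < y 0 ∧ 0 < y 0 + y 1 ∧ 0 < y 0 - y 1 ∧ |y 1| < y 0 ∧ |y 2| < y 0 := by
  obtain ⟨h1, h2⟩ := h
  have h3 : 0 < y 0 - y 1 := by
    by_contra hc
    nlinarith [sq_nonneg (y 2)]
  have h0 : 0 < y 0 := by linarith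
  refine ⟨h0, h1, h3, abs_lt.2 ⟨by linarith, by linarith⟩, ?_⟩
  apply abs_lt_of_sq_lt_sq _ h0.le
  nlinarith [sq_nonneg (y 1)]

theorem L3_of_lt {y : Fin 3 → ℝ} {r : ℝ} (hr : 0 ≤ r) (h : r ^ 2 = y 1 ^ 2 + y 2 ^ 2) (h0 : r < y 0) :
    y ∈ Lambda3 := by
  have h1 : |y 1| ≤ r := abs_le_of_sq_le_sq (by nlinarith [sq_nonneg (y 2)]) hr
  have := abs_le.1 h1
  exact ⟨by linarith, by nlinarith⟩

theorem isOpen_L3 : IsOpen Lambda3 := by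
  have h1 : IsOpen {y : Fin 3 → ℝ | 0 < y 0 + y 1} := isOpen_lt (by fun_prop) (by fun_prop)
  have h2 : IsOpen {y : Fin 3 → ℝ | 0 < (y 0) ^ 2 - (y 1) ^ 2 - (y 2) ^ 2} :=
    isOpen_lt (by fun_prop) (by fun_prop)
  exact h1.inter h2

theorem measurableSet_L3 : MeasurableSet Lambda3 := isOpen_L3.measurableSet

theorem isOpen_T3 : IsOpen TLambda3 :=
  isOpen_L3.preimage (f := fun z : Fin 3 → ℂ => fun i => (z i).im) (by fun_prop)

theorem tp_mem {x y : Fin 3 → ℝ} (h : y ∈ Lambda3) : tp x y ∈ TLambda3 := by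
  have : (fun i => (tp x y i).im) = y := by ext i; simp [tp]
  show (fun i => (tp x y i).im) ∈ Lambda3
  rwa [this]

theorem eq_tp (z : Fin 3 → ℂ) : z = tp (fun i => (z i).re) (fun i => (z i).im) := by
  ext i; simp [tp, Complex.re_add_im]

theorem sq_cs {u v s a b c : ℝ} (hu : 0 < u) (hv : 0 < v) (ha : 0 < a) (hb : 0 < b)
    (h1 : s ^ 2 < u * v) (h2 : c ^ 2 < a * b) : 0 < u * a + v * b + 2 * (s * c) := by
  have h3 : s ^ 2 * c ^ 2 < (u * v) * (a * b) :=
    mul_lt_mul'' h1 h2 (sq_nonneg _) (sq_nonneg _)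
  have h4 : (2 * (s * c)) ^ 2 < (u * a + v * b) ^ 2 := by
    nlinarith [sq_nonneg (u * a - v * b)]
  have h5 : 0 < u * a + v * b := by positivity
  have := abs_lt.1 (abs_lt_of_sq_lt_sq h4 h5.le)
  linarith

theorem ip_pos {y ξ : Fin 3 → ℝ} (h : y ∈ Lambda3) (h' : ξ ∈ Lambda3) : 0 < ip y ξ := by
  obtain ⟨_, a1, a2, _, _⟩ := L3_pos h
  obtain ⟨_, b1, b2, _, _⟩ := L3_pos h'
  have := sq_cs a1 a2 b1 b2 (s := y 2) (c := ξ 2) (by nlinarith [h.2]) (by nlinarith [h'.2])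
  unfold ip
  nlinarith

theorem L3_add {y ξ : Fin 3 → ℝ} (h : y ∈ Lambda3) (h' : ξ ∈ Lambda3) : y + ξ ∈ Lambda3 := by
  obtain ⟨_, a1, a2, _, _⟩ := L3_pos h
  obtain ⟨_, b1, b2, _, _⟩ := L3_pos h'
  have := sq_cs a1 a2 b2 b1 (s := y 2) (c := - ξ 2) (by nlinarith [h.2]) (by nlinarith [h'.2])
  refine ⟨?_, ?_⟩
  · simp only [Pi.add_apply]; linarith
  · simp only [Pi.add_apply]; nlinarith [h.2, h'.2]

theorem L3_smul {y : Fin 3 → ℝ} {t : ℝ} (ht : 0 < t) (h : y ∈ Lambda3) : t • y ∈ Lambda3 := by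
  refine ⟨?_, ?_⟩
  · simp only [Pi.smul_apply, smul_eq_mul]; nlinarith [mul_pos ht h.1]
  · simp only [Pi.smul_apply, smul_eq_mul]
    have := mul_pos (pow_pos ht 2) h.2
    nlinarith

theorem convex_L3 : Convex ℝ Lambda3 := by
  rw [convex_iff_forall_pos]
  intro x hx y hy a b ha hb _
  exact L3_add (L3_smul ha hx) (L3_smul hb hy)

/-- the base point of the cone -/
def e0 : Fin 3 → ℝ := ![1, 0, 0]

theorem e0_mem : e0 ∈ Lambda3 := by
  refine ⟨?_, ?_⟩ <;> simp [e0]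

theorem ip_e0 (ξ : Fin 3 → ℝ) : ip e0 ξ = ξ 0 := by simp [ip, e0]

theorem exists_sub_mem {y : Fin 3 → ℝ} (h : y ∈ Lambda3) : ∃ δ : ℝ, 0 < δ ∧ y - δ • e0 ∈ Lambda3 := by
  have hc : ContinuousAt (fun δ : ℝ => y - δ • e0) 0 := by fun_prop
  have : ∀ᶠ δ in nhds (0 : ℝ), y - δ • e0 ∈ Lambda3 :=
    hc.eventually_mem (isOpen_L3.mem_nhds (by simpa using h))
  obtain ⟨ε, hε, hb⟩ := Metric.eventually_nhds_iff.1 this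
  exact ⟨ε / 2, by positivity, hb (by simp [abs_of_pos hε]; linarith)⟩

theorem exists_neg_ip {ξ : Fin 3 → ℝ} (h : ξ ∉ closure Lambda3) : ∃ y ∈ Lambda3, ip y ξ < 0 := by
  by_contra hc
  push Not at hc
  apply h
  set r := Real.sqrt (ξ 1 ^ 2 + ξ 2 ^ 2) with hr
  have hr2 : r ^ 2 = ξ 1 ^ 2 + ξ 2 ^ 2 := Real.sq_sqrt (by positivity)
  have hr0 : 0 ≤ r := Real.sqrt_nonneg _
  have k : ∀ t > 0, 0 ≤ (r + t) * ξ 0 - r ^ 2 := by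
    intro t ht
    have := hc ![r + t, -ξ 1, -ξ 2] (L3_of_lt hr0 (by simp [hr2]) (by simpa using ht))
    simp [ip] at this
    nlinarith
  have hge : r ≤ ξ 0 := by
    have h0 : 0 ≤ ξ 0 := by
      have := k 1 one_pos
      have : 0 ≤ (r + 1) * ξ 0 := by nlinarith
      exact nonneg_of_mul_nonneg_right this (by linarith)
    by_contra hlt
    push Not at hlt
    have hrp : 0 < r := lt_of_le_of_lt h0 hlt
    have hd : 0 < r - ξ 0 := by linarith
    have hb : 0 < ξ 0 + 1 := by linarith
    have := k (r * (r - ξ 0) / (2 * (ξ 0 + 1))) (by positivity)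
    have e : (r * (r - ξ 0) / (2 * (ξ 0 + 1))) * ξ 0 ≤ r * (r - ξ 0) / 2 := by
      rw [div_mul_eq_mul_div, div_le_div_iff₀ (by positivity) (by positivity)]
      have : 0 < r * (r - ξ 0) := by positivity
      nlinarith
    nlinarith [mul_pos hrp hd]
  rw [Metric.mem_closure_iff]
  intro ε hε
  refine ⟨ξ + (ε / 2) • e0, L3_of_lt hr0 (by simp [e0, hr2]) (by simp [e0]; linarith), ?_⟩
  have : ‖e0‖ ≤ 1 := by
    rw [pi_norm_le_iff_of_nonneg zero_le_one]
    intro i; fin_cases i <;> simp [e0]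
  simp only [dist_self_add_right, norm_smul, Real.norm_eq_abs, abs_of_pos (half_pos hε)]
  nlinarith

theorem DeltaL_pos {y : Fin 3 → ℝ} (h : y ∈ Lambda3) : 0 < DeltaL y := h.2

theorem tp_continuous : Continuous (fun p : (Fin 3 → ℝ) × (Fin 3 → ℝ) => tp p.1 p.2) := by
  unfold tp; fun_prop

theorem tp_shift (x y v : Fin 3 → ℝ) (s t : ℝ) :
    tp x y + ((s : ℂ) + t * Complex.I) • (fun i => (v i : ℂ)) = tp (x + s • v) (y + t • v) := by
  ext i; simp [tp]; ring

theorem curve_integral (Φ : (Fin 3 → ℂ) → ℂ) (hΦ : ContinuousOn Φ TLambda3)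
    (y v : Fin 3 → ℝ) (hy : ∀ t ∈ Icc (0 : ℝ) 1, y + t • v ∈ Lambda3) (M : ℝ≥0∞) (hM : M < ⊤)
    (hb : ∀ t ∈ Icc (0 : ℝ) 1, ∫⁻ x, ‖Φ (tp x (y + t • v))‖ₑ ≤ M)
    (s t : ℝ → ℝ) (hs : Continuous s) (ht : Continuous t)
    (htI : ∀ τ ∈ Icc (0 : ℝ) 1, t τ ∈ Icc (0 : ℝ) 1) :
    Integrable (fun x => ∫ τ in (0 : ℝ)..1, Φ (tp (x + s τ • v) (y + t τ • v))) ∧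
    ∫ x, ∫ τ in (0 : ℝ)..1, Φ (tp (x + s τ • v) (y + t τ • v)) =
      ∫ τ in (0 : ℝ)..1, ∫ x, Φ (tp x (y + t τ • v)) := by
  simp only [intervalIntegral.integral_of_le zero_le_one]
  have hmeas : AEStronglyMeasurable (fun p : (Fin 3 → ℝ) × ℝ => Φ (tp (p.1 + s p.2 • v) (y + t p.2 • v)))
      (volume.prod (volume.restrict (Ioc (0 : ℝ) 1))) := by
    have hr : (volume : Measure (Fin 3 → ℝ)).prod (volume.restrict (Ioc (0 : ℝ) 1)) =
      ((volume : Measure (Fin 3 → ℝ)).prod volume).restrict (univ ×ˢ Ioc (0 : ℝ) 1) := by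
      rw [← Measure.prod_restrict, Measure.restrict_univ]
    rw [hr]
    refine ContinuousOn.aestronglyMeasurable ?_ (MeasurableSet.univ.prod measurableSet_Ioc)
    refine hΦ.comp (Continuous.continuousOn ?_) ?_
    · exact tp_continuous.comp (by fun_prop : Continuous fun p : (Fin 3 → ℝ) × ℝ =>
        ((p.1 + s p.2 • v), (y + t p.2 • v)))
    · intro p hp
      exact tp_mem (hy _ (htI _ (Ioc_subset_Icc_self hp.2)))
  have hInt : Integrable (fun p : (Fin 3 → ℝ) × ℝ => Φ (tp (p.1 + s p.2 • v) (y + t p.2 • v)))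
      (volume.prod (volume.restrict (Ioc (0 : ℝ) 1))) := by
    refine ⟨hmeas, ?_⟩
    rw [HasFiniteIntegral, lintegral_prod_symm _ hmeas.enorm]
    have : ∫⁻ τ in Ioc (0 : ℝ) 1, ∫⁻ x, ‖Φ (tp (x + s τ • v) (y + t τ • v))‖ₑ ≤
        ∫⁻ τ in Ioc (0 : ℝ) 1, M := by
      apply setLIntegral_mono' measurableSet_Ioc
      intro τ hτ
      have := lintegral_add_right_eq_self (μ := volume)
        (fun x => ‖Φ (tp x (y + t τ • v))‖ₑ) (s τ • v)
      rw [this]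
      exact hb _ (htI _ (Ioc_subset_Icc_self hτ))
    refine lt_of_le_of_lt this ?_
    simpa using hM
  refine ⟨hInt.integral_prod_left, ?_⟩
  rw [integral_integral_swap hInt]
  congr 1; ext τ
  exact integral_add_right_eq_self (μ := volume) (fun x => Φ (tp x (y + t τ • v))) (s τ • v)

theorem int_comb {f1 f2 f3 f4 : (Fin 3 → ℝ) → ℂ} (i1 : Integrable f1) (i2 : Integrable f2)
    (i3 : Integrable f3) (i4 : Integrable f4)
    (key : ∀ x, f1 x - f2 x + Complex.I • f3 x - Complex.I • f4 x = 0) :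
    (∫ x, f1 x) - (∫ x, f2 x) + Complex.I • (∫ x, f3 x) - Complex.I • (∫ x, f4 x) = 0 := by
  rw [← integral_smul, ← integral_smul, ← integral_sub i1 i2]
  have i3' : Integrable (fun x => Complex.I • f3 x) := i3.smul Complex.I
  have i4' : Integrable (fun x => Complex.I • f4 x) := i4.smul Complex.I
  have i12 : Integrable (fun x => f1 x - f2 x) := i1.sub i2
  have i123 : Integrable (fun x => f1 x - f2 x + Complex.I • f3 x) := i12.add i3'
  rw [← integral_add i12 i3', ← integral_sub i123 i4']
  simp only [key, integral_zero]

theorem shift_const (Φ : (Fin 3 → ℂ) → ℂ) (hΦ : DifferentiableOn ℂ Φ TLambda3)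
    (y v : Fin 3 → ℝ) (hy : ∀ t ∈ Icc (0 : ℝ) 1, y + t • v ∈ Lambda3) (M : ℝ≥0∞) (hM : M < ⊤)
    (hb : ∀ t ∈ Icc (0 : ℝ) 1, ∫⁻ x, ‖Φ (tp x (y + t • v))‖ₑ ≤ M) :
    ∫ x, Φ (tp x y) = ∫ x, Φ (tp x (y + v)) := by
  have C := curve_integral Φ hΦ.continuousOn y v hy M hM hb
  obtain ⟨i1, j1⟩ := C id (fun _ => 0) continuous_id continuous_const (by simp)
  obtain ⟨i2, j2⟩ := C id (fun _ => 1) continuous_id continuous_const (by simp)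
  obtain ⟨i3, j3⟩ := C (fun _ => 1) id continuous_const continuous_id (by simp)
  obtain ⟨i4, j4⟩ := C (fun _ => 0) id continuous_const continuous_id (by simp)
  have key : ∀ x : Fin 3 → ℝ,
      (∫ τ in (0 : ℝ)..1, Φ (tp (x + id τ • v) (y + (0 : ℝ) • v))) -
      (∫ τ in (0 : ℝ)..1, Φ (tp (x + id τ • v) (y + (1 : ℝ) • v))) +
      Complex.I • (∫ τ in (0 : ℝ)..1, Φ (tp (x + (1 : ℝ) • v) (y + id τ • v))) -
      Complex.I • (∫ τ in (0 : ℝ)..1, Φ (tp (x + (0 : ℝ) • v) (y + id τ • v))) = 0 := by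
    intro x
    have := Complex.integral_boundary_rect_eq_zero_of_differentiableOn
      (fun w : ℂ => Φ (tp x y + w • (fun i => (v i : ℂ)))) 0 (1 + Complex.I) (by
        refine hΦ.comp (by fun_prop) ?_
        intro w hw
        have hw2 : w.im ∈ Icc (0 : ℝ) 1 := by
          have := hw.2
          simpa using this
        have e : w = (w.re : ℂ) + w.im * Complex.I := (Complex.re_add_im w).symm
        rw [e]
        show tp x y + _ • _ ∈ _
        rw [tp_shift]
        exact tp_mem (hy _ hw2))
    simp only [tp_shift] at this
    simpa using this
  have s := int_comb i1 i2 i3 i4 key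
  rw [j1, j2, j3, j4] at s
  simp at s
  exact sub_eq_zero.1 s

theorem circle_sub_mean (f : ℂ → ℂ) (r ρ : ℝ) (hρ : 0 < ρ) (hρr : ρ ≤ r)
    (hf : DifferentiableOn ℂ f (Metric.closedBall 0 r)) :
    ENNReal.ofReal (2 * Real.pi) * ‖f 0‖ₑ ^ 2 ≤
      ∫⁻ θ in Ioo (-Real.pi) Real.pi, ‖f (Complex.polarCoord.symm (ρ, θ))‖ₑ ^ 2 := by
  have hd : DiffContOnCl ℂ (fun z => f z ^ 2) (Metric.ball 0 |ρ|) := by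
    apply DifferentiableOn.diffContOnCl
    refine (hf.pow 2).mono ?_
    refine Metric.closure_ball_subset_closedBall.trans (Metric.closedBall_subset_closedBall ?_)
    rwa [abs_of_pos hρ]
  have h1 := hd.circleAverage
  have hpi := Real.pi_pos
  rw [Real.circleAverage_eq_integral_add (-Real.pi),
    intervalIntegral.integral_comp_add_right (fun θ => f (circleMap 0 ρ θ) ^ 2),
    show (0 : ℝ) + -Real.pi = -Real.pi by ring, show 2 * Real.pi + -Real.pi = Real.pi by ring,
    intervalIntegral.integral_of_le (by linarith), integral_Ioc_eq_integral_Ioo] at h1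
  have h2 : (∫ θ in Ioo (-Real.pi) Real.pi, f (circleMap 0 ρ θ) ^ 2) = (2 * Real.pi) • f 0 ^ 2 := by
    rw [← h1, smul_smul, mul_inv_cancel₀ (by positivity), one_smul]
  calc ENNReal.ofReal (2 * Real.pi) * ‖f 0‖ₑ ^ 2 = ‖(2 * Real.pi) • f 0 ^ 2‖ₑ := by
        rw [enorm_smul, enorm_pow, Real.enorm_eq_ofReal (by positivity)]
    _ = ‖∫ θ in Ioo (-Real.pi) Real.pi, f (circleMap 0 ρ θ) ^ 2‖ₑ := by rw [h2]
    _ ≤ ∫⁻ θ in Ioo (-Real.pi) Real.pi, ‖f (circleMap 0 ρ θ) ^ 2‖ₑ := enorm_integral_le_lintegral_enorm _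
    _ = _ := by
        congr 1; ext θ
        rw [enorm_pow]
        congr 3
        simp [circleMap, Complex.exp_mul_I]

theorem disc_sub_mean (f : ℂ → ℂ) (r : ℝ) (hr : 0 < r)
    (hf : DifferentiableOn ℂ f (Metric.closedBall 0 r)) :
    ENNReal.ofReal (Real.pi * r ^ 2) * ‖f 0‖ₑ ^ 2 ≤
      ∫⁻ t in Icc (-r) r, ∫⁻ s in Icc (-r) r, ‖f ((s : ℂ) + t * Complex.I)‖ₑ ^ 2 := by
  set h : ℂ → ℝ≥0∞ := (Metric.closedBall (0 : ℂ) r).indicator (fun w => ‖f w‖ₑ ^ 2) with hh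
  have hm : Measurable h := by
    classical
    rw [hh, ← Set.piecewise_eq_indicator]
    apply ContinuousOn.measurable_piecewise
    · have := hf.continuousOn
      exact (ENNReal.continuous_pow 2).comp_continuousOn this.enorm
    · exact continuousOn_const
    · exact Metric.isClosed_closedBall.measurableSet
  have e1 : ∫⁻ w, h w = ∫⁻ t : ℝ, ∫⁻ s : ℝ, h ((s : ℂ) + t * Complex.I) := by
    rw [← (Complex.volume_preserving_equiv_real_prod.symm).lintegral_comp_emb
      Complex.measurableEquivRealProd.symm.measurableEmbedding, Measure.volume_eq_prod,
      lintegral_prod_symm]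
    swap
    · exact (hm.comp Complex.measurableEquivRealProd.symm.measurable).aemeasurable
    congr 1; ext t; congr 1; ext s
    congr 1
    apply Complex.ext <;> simp [Complex.measurableEquivRealProd]
  have e2 : ∫⁻ w, h w = ∫⁻ ρ in Ioi (0 : ℝ), ∫⁻ θ in Ioo (-Real.pi) Real.pi,
      ENNReal.ofReal ρ * h (Complex.polarCoord.symm (ρ, θ)) := by
    rw [← Complex.lintegral_comp_polarCoord_symm h, polarCoord_target, Measure.volume_eq_prod,
      ← Measure.prod_restrict, lintegral_prod]
    · rfl
    · apply Measurable.aemeasurable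
      have : Measurable fun p : ℝ × ℝ => h (Complex.polarCoord.symm p) := by
        have h5 : Measurable fun p : ℝ × ℝ => ((p.1 : ℂ) * (Real.cos p.2 + Real.sin p.2 * Complex.I)) := by
          fun_prop
        have h6 : (fun p : ℝ × ℝ => h (Complex.polarCoord.symm p)) = h ∘ _ :=
          funext fun p => congrArg h (Complex.polarCoord_symm_apply p)
        rw [h6]
        exact hm.comp h5
      exact (measurable_fst.ennreal_ofReal).mul this
  have l1 : ENNReal.ofReal (Real.pi * r ^ 2) * ‖f 0‖ₑ ^ 2 ≤ ∫⁻ w, h w := by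
    rw [e2]
    calc ENNReal.ofReal (Real.pi * r ^ 2) * ‖f 0‖ₑ ^ 2 =
        ∫⁻ ρ in Ioc (0 : ℝ) r, ENNReal.ofReal ρ * (ENNReal.ofReal (2 * Real.pi) * ‖f 0‖ₑ ^ 2) := by
          rw [lintegral_mul_const _ (by fun_prop)]
          have : ∫⁻ ρ in Ioc (0 : ℝ) r, ENNReal.ofReal ρ = ENNReal.ofReal (r ^ 2 / 2) := by
            rw [← ofReal_integral_eq_lintegral_ofReal]
            · congr 1
              rw [← intervalIntegral.integral_of_le hr.le, integral_id]; ring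
            · exact (continuous_id.integrableOn_Icc).mono_set Ioc_subset_Icc_self
            · filter_upwards [self_mem_ae_restrict measurableSet_Ioc] with x hx using hx.1.le
          rw [this, ← mul_assoc, ← ENNReal.ofReal_mul (by positivity)]
          congr 2; ring
      _ ≤ ∫⁻ ρ in Ioc (0 : ℝ) r, ∫⁻ θ in Ioo (-Real.pi) Real.pi,
            ENNReal.ofReal ρ * h (Complex.polarCoord.symm (ρ, θ)) := by
          apply setLIntegral_mono' measurableSet_Ioc
          intro ρ hρ
          rw [lintegral_const_mul' _ _ ENNReal.ofReal_ne_top]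
          gcongr
          refine (circle_sub_mean f r ρ hρ.1 hρ.2 hf).trans (le_of_eq ?_)
          congr 1; ext θ
          rw [hh, indicator_of_mem]
          rw [mem_closedBall_zero_iff, Complex.norm_polarCoord_symm]
          simpa [abs_of_pos hρ.1] using hρ.2
      _ ≤ _ := lintegral_mono_set Ioc_subset_Ioi_self
  refine l1.trans ?_
  rw [e1, ← lintegral_indicator measurableSet_Icc]
  refine lintegral_mono fun t => ?_
  by_cases ht : t ∈ Icc (-r) r
  · rw [indicator_of_mem ht, ← lintegral_indicator measurableSet_Icc]
    refine lintegral_mono fun s => ?_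
    by_cases hs : s ∈ Icc (-r) r
    · rw [indicator_of_mem hs]
      exact indicator_le_self _ _ _
    · rw [hh, indicator_of_notMem, ]
      · exact zero_le
      intro hc
      rw [mem_closedBall_zero_iff] at hc
      have := (Complex.abs_re_le_norm _).trans hc
      simp at this
      exact hs (abs_le.1 this)
  · refine le_of_eq_of_le ?_ zero_le
    rw [lintegral_eq_zero_iff' (by
      apply Measurable.aemeasurable
      apply hm.comp; fun_prop)]
    filter_upwards with s
    rw [hh, indicator_of_notMem]
    · rfl
    intro hc
    rw [mem_closedBall_zero_iff] at hc
    have := (Complex.abs_im_le_norm _).trans hc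
    simp at this
    exact ht (abs_le.1 this)

/-- square norm of the horizontal slice -/
def NN (G : (Fin 3 → ℂ) → ℂ) (y : Fin 3 → ℝ) : ℝ≥0∞ := ∫⁻ x, ‖G (tp x y)‖ₑ ^ 2

theorem NN_mean (G : (Fin 3 → ℂ) → ℂ) (hG : DifferentiableOn ℂ G TLambda3)
    (y v : Fin 3 → ℝ) (r : ℝ) (hr : 0 < r) (hy : ∀ t ∈ Icc (-r) r, y + t • v ∈ Lambda3) :
    ENNReal.ofReal (Real.pi * r ^ 2) * NN G y ≤
      ENNReal.ofReal (2 * r) * ∫⁻ t in Icc (-r) r, NN G (y + t • v) := by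
  have h1 : ∀ x, ENNReal.ofReal (Real.pi * r ^ 2) * ‖G (tp x y)‖ₑ ^ 2 ≤
      ∫⁻ t in Icc (-r) r, ∫⁻ s in Icc (-r) r, ‖G (tp (x + s • v) (y + t • v))‖ₑ ^ 2 := by
    intro x
    have := disc_sub_mean (fun w : ℂ => G (tp x y + w • (fun i => (v i : ℂ)))) r hr (by
        refine hG.comp (by fun_prop) ?_
        intro w hw
        rw [mem_closedBall_zero_iff] at hw
        have hw2 : w.im ∈ Icc (-r) r := abs_le.1 ((Complex.abs_im_le_norm w).trans hw)
        have e : w = (w.re : ℂ) + w.im * Complex.I := (Complex.re_add_im w).symm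
        rw [e]
        show tp x y + _ • _ ∈ _
        rw [tp_shift]
        exact tp_mem (hy _ hw2))
    simp only [tp_shift] at this
    simpa using this
  set μ : Measure ℝ := volume.restrict (Icc (-r) r) with hμ
  have hm : AEMeasurable (fun p : (Fin 3 → ℝ) × (ℝ × ℝ) =>
      ‖G (tp (p.1 + p.2.2 • v) (y + p.2.1 • v))‖ₑ ^ 2) (volume.prod (μ.prod μ)) := by
    have hr : (volume : Measure (Fin 3 → ℝ)).prod (μ.prod μ) =
      ((volume : Measure (Fin 3 → ℝ)).prod (volume.prod volume)).restrict
        (univ ×ˢ (Icc (-r) r ×ˢ Icc (-r) r)) := by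
      rw [← Measure.prod_restrict, Measure.restrict_univ, ← Measure.prod_restrict]
    rw [hr]
    apply AEMeasurable.pow_const
    apply AEStronglyMeasurable.enorm
    refine ContinuousOn.aestronglyMeasurable ?_
      (MeasurableSet.univ.prod (measurableSet_Icc.prod measurableSet_Icc))
    refine hG.continuousOn.comp (Continuous.continuousOn ?_) ?_
    · exact tp_continuous.comp (by fun_prop : Continuous fun p : (Fin 3 → ℝ) × (ℝ × ℝ) =>
        ((p.1 + p.2.2 • v), (y + p.2.1 • v)))
    · intro p hp
      exact tp_mem (hy _ hp.2.1)
  have hmx : ∀ x, AEMeasurable (fun p : (ℝ × ℝ) =>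
      ‖G (tp (x + p.2 • v) (y + p.1 • v))‖ₑ ^ 2) (μ.prod μ) := by
    intro x
    have hr : (μ.prod μ) =
      (((volume : Measure ℝ).prod volume)).restrict
        ((Icc (-r) r ×ˢ Icc (-r) r)) := by
      rw [← Measure.prod_restrict]
    rw [hr]
    apply AEMeasurable.pow_const
    apply AEStronglyMeasurable.enorm
    refine ContinuousOn.aestronglyMeasurable ?_
      ((measurableSet_Icc.prod measurableSet_Icc))
    refine hG.continuousOn.comp (Continuous.continuousOn ?_) ?_
    · exact tp_continuous.comp (by fun_prop : Continuous fun p : (ℝ × ℝ) =>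
        ((x + p.2 • v), (y + p.1 • v)))
    · intro p hp
      exact tp_mem (hy _ hp.1)
  have hm2 : AEMeasurable (fun p : (ℝ × ℝ) =>
      ∫⁻ x, ‖G (tp (x + p.2 • v) (y + p.1 • v))‖ₑ ^ 2) (μ.prod μ) :=
    hm.lintegral_prod_left'
  calc ENNReal.ofReal (Real.pi * r ^ 2) * NN G y
      = ∫⁻ x, ENNReal.ofReal (Real.pi * r ^ 2) * ‖G (tp x y)‖ₑ ^ 2 := by
        rw [NN, lintegral_const_mul' _ _ ENNReal.ofReal_ne_top]
    _ ≤ ∫⁻ x, ∫⁻ p : ℝ × ℝ, ‖G (tp (x + p.2 • v) (y + p.1 • v))‖ₑ ^ 2 ∂(μ.prod μ) := by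
        refine lintegral_mono fun x => (h1 x).trans (le_of_eq ?_)
        rw [lintegral_prod _ (hmx x)]
    _ = ∫⁻ p : ℝ × ℝ, (∫⁻ x, ‖G (tp (x + p.2 • v) (y + p.1 • v))‖ₑ ^ 2) ∂(μ.prod μ) :=
        lintegral_lintegral_swap hm
    _ = ∫⁻ p : ℝ × ℝ, NN G (y + p.1 • v) ∂(μ.prod μ) := by
        congr 1; ext p
        exact lintegral_add_right_eq_self (μ := volume)
          (fun x => ‖G (tp x (y + p.1 • v))‖ₑ ^ 2) (p.2 • v)
    _ = _ := by
        rw [lintegral_prod]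
        · simp only [lintegral_const]
          have hv : μ univ = ENNReal.ofReal (2 * r) := by
            rw [hμ, Measure.restrict_apply_univ, Real.volume_Icc]
            congr 1; ring
          rw [hv, lintegral_mul_const' _ _ ENNReal.ofReal_ne_top, mul_comm]
        · refine hm2.congr ?_
          filter_upwards with p
          exact lintegral_add_right_eq_self (μ := volume)
            (fun x => ‖G (tp x (y + p.1 • v))‖ₑ ^ 2) (p.2 • v)


theorem NN_meas (G : (Fin 3 → ℂ) → ℂ) (hG : DifferentiableOn ℂ G TLambda3) :
    Measurable (Lambda3.indicator (NN G)) := by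
  have h : Measurable (fun p : (Fin 3 → ℝ) × (Fin 3 → ℝ) =>
      (univ ×ˢ Lambda3).indicator (fun p => ‖G (tp p.1 p.2)‖ₑ ^ 2) p) := by
    classical
    show Measurable ((univ ×ˢ Lambda3).indicator (fun p => ‖G (tp p.1 p.2)‖ₑ ^ 2))
    rw [← Set.piecewise_eq_indicator]
    apply ContinuousOn.measurable_piecewise
    · refine (ENNReal.continuous_pow 2).comp_continuousOn (ContinuousOn.enorm ?_)
      exact hG.continuousOn.comp tp_continuous.continuousOn (fun p hp => tp_mem hp.2)
    · exact continuousOn_const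
    · exact MeasurableSet.univ.prod measurableSet_L3
  have h2 := h.lintegral_prod_left' (μ := volume)
  convert h2 using 2 with y
  by_cases hy : y ∈ Lambda3
  · simp [hy, NN, indicator]
  · simp [hy, indicator]

theorem lint3 (f : (Fin 3 → ℝ) → ℝ≥0∞) (hf : Measurable f) :
    ∫⁻ y, f y = ∫⁻ a : ℝ, ∫⁻ b : ℝ, ∫⁻ c : ℝ, f ![a, b, c] := by
  rw [← (volume_preserving_piFinSuccAbove (fun _ : Fin 3 => ℝ) 0).symm.lintegral_comp_emb
      (MeasurableEquiv.measurableEmbedding _), Measure.volume_eq_prod, lintegral_prod]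
  swap
  · exact (hf.comp (MeasurableEquiv.measurable _)).aemeasurable
  refine lintegral_congr fun a => ?_
  have hf2 : Measurable fun w : Fin 2 → ℝ => f ((MeasurableEquiv.piFinSuccAbove (fun _ : Fin 3 => ℝ) 0).symm (a, w)) := by
    apply hf.comp
    apply (MeasurableEquiv.measurable _).comp
    fun_prop
  rw [← (volume_preserving_finTwoArrow ℝ).symm.lintegral_comp_emb
      (MeasurableEquiv.measurableEmbedding _), Measure.volume_eq_prod, lintegral_prod]
  swap
  · exact (hf2.comp (MeasurableEquiv.measurable _)).aemeasurable
  refine lintegral_congr fun b => lintegral_congr fun c => ?_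
  congr 1
  ext i
  fin_cases i <;> simp [MeasurableEquiv.piFinSuccAbove, Fin.insertNthEquiv, MeasurableEquiv.finTwoArrow]

theorem NN_bound (G : (Fin 3 → ℂ) → ℂ) (hG : DifferentiableOn ℂ G TLambda3)
    (r : ℝ) (hr : 0 < r) : ∃ C : ℝ≥0∞, C < ⊤ ∧ ∀ y : Fin 3 → ℝ,
      Metric.closedBall y r ⊆ Lambda3 → NN G y ≤ C * ∫⁻ w in Metric.closedBall y r, NN G w := by
  set D : ℝ≥0∞ := (ENNReal.ofReal (Real.pi * r ^ 2))⁻¹ * ENNReal.ofReal (2 * r) with hD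
  have hp : 0 < Real.pi * r ^ 2 := by positivity
  have hDt : D ≠ ⊤ := ENNReal.mul_ne_top (by simp [hp]) ENNReal.ofReal_ne_top
  have key : ∀ y v : Fin 3 → ℝ, (∀ t ∈ Icc (-r) r, y + t • v ∈ Lambda3) →
      NN G y ≤ D * ∫⁻ t in Icc (-r) r, NN G (y + t • v) := by
    intro y v h
    have := NN_mean G hG y v r hr h
    rw [hD, mul_assoc]
    rwa [← ENNReal.div_eq_inv_mul, ENNReal.le_div_iff_mul_le (by simp [hp]) (by simp), mul_comm]
  refine ⟨D * (D * D), (ENNReal.mul_ne_top hDt (ENNReal.mul_ne_top hDt hDt)).lt_top, ?_⟩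
  intro y hy
  have hmem : ∀ a b c : ℝ, a ∈ Icc (-r) r → b ∈ Icc (-r) r → c ∈ Icc (-r) r →
      y + ![a, b, c] ∈ Metric.closedBall y r := by
    intro a b c ha hb hc
    rw [mem_closedBall_iff_norm, add_sub_cancel_left, pi_norm_le_iff_of_nonneg hr.le]
    intro i
    fin_cases i
    · simpa using abs_le.2 ha
    · simpa using abs_le.2 hb
    · simpa using abs_le.2 hc
  have h0 : (0 : ℝ) ∈ Icc (-r) r := ⟨by linarith, hr.le⟩
  calc NN G y ≤ D * ∫⁻ a in Icc (-r) r, NN G (y + ![a, 0, 0]) := by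
        refine (key y ![1, 0, 0] ?_).trans (le_of_eq ?_)
        · intro t ht
          have := hy (hmem t 0 0 ht h0 h0)
          simpa using this
        · simp
    _ ≤ D * ∫⁻ a in Icc (-r) r, D * ∫⁻ b in Icc (-r) r, NN G (y + ![a, b, 0]) := by
        gcongr D * ?_
        refine setLIntegral_mono' measurableSet_Icc fun a ha => ?_
        have e : ∀ t : ℝ, y + ![a, 0, 0] + t • ![0, 1, 0] = y + ![a, t, 0] := by
          intro t; rw [add_assoc]; simp
        refine (key _ ![0, 1, 0] ?_).trans (le_of_eq ?_)
        · intro t ht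
          rw [e]
          exact hy (hmem a t 0 ha ht h0)
        · simp only [e]
    _ ≤ D * ∫⁻ a in Icc (-r) r, D * ∫⁻ b in Icc (-r) r, D * ∫⁻ c in Icc (-r) r,
          NN G (y + ![a, b, c]) := by
        gcongr D * ?_
        refine setLIntegral_mono' measurableSet_Icc fun a ha => ?_
        gcongr D * ?_
        refine setLIntegral_mono' measurableSet_Icc fun b hb => ?_
        have e : ∀ t : ℝ, y + ![a, b, 0] + t • ![0, 0, 1] = y + ![a, b, t] := by
          intro t; rw [add_assoc]; simp
        refine (key _ ![0, 0, 1] ?_).trans (le_of_eq ?_)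
        · intro t ht
          rw [e]
          exact hy (hmem a b t ha hb ht)
        · simp only [e]
    _ = D * (D * D) * ∫⁻ a in Icc (-r) r, ∫⁻ b in Icc (-r) r, ∫⁻ c in Icc (-r) r,
          NN G (y + ![a, b, c]) := by
        simp only [lintegral_const_mul' _ _ hDt]
        ring
    _ ≤ _ := by
        gcongr
        have hm : Measurable ((Metric.closedBall y r).indicator (Lambda3.indicator (NN G))) :=
          (NN_meas G hG).indicator Metric.isClosed_closedBall.measurableSet
        have e : ∫⁻ w in Metric.closedBall y r, NN G w =
            ∫⁻ w, (Metric.closedBall y r).indicator (Lambda3.indicator (NN G)) (y + w) := by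
          rw [lintegral_add_left_eq_self
            ((Metric.closedBall y r).indicator (Lambda3.indicator (NN G))),
            lintegral_indicator Metric.isClosed_closedBall.measurableSet]
          refine setLIntegral_congr_fun Metric.isClosed_closedBall.measurableSet fun w hw => ?_
          rw [indicator_of_mem (hy hw)]
        rw [e, lint3 (fun w => (Metric.closedBall y r).indicator (Lambda3.indicator (NN G)) (y + w))
          (hm.comp (measurable_const_add y))]
        rw [← lintegral_indicator measurableSet_Icc]
        refine lintegral_mono fun a => ?_
        refine indicator_apply_le' (fun ha => ?_) (fun _ => zero_le)
        rw [← lintegral_indicator measurableSet_Icc]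
        refine lintegral_mono fun b => ?_
        refine indicator_apply_le' (fun hb => ?_) (fun _ => zero_le)
        rw [← lintegral_indicator measurableSet_Icc]
        refine lintegral_mono fun c => ?_
        refine indicator_apply_le' (fun hc => ?_) (fun _ => zero_le)
        have := hmem a b c ha hb hc
        rw [indicator_of_mem this, indicator_of_mem (hy this)]

/-- local boundedness of slice norms -/
def LB (G : (Fin 3 → ℂ) → ℂ) : Prop := ∀ K : Set (Fin 3 → ℝ), IsCompact K → K ⊆ Lambda3 →
  ∃ M : ℝ≥0∞, M < ⊤ ∧ ∀ y ∈ K, NN G y ≤ M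

theorem LB_hardy (F : (Fin 3 → ℂ) → ℂ) (h : hardyNormSq F < ⊤) : LB F := by
  intro K _ hK
  refine ⟨_, h, fun y hy => ?_⟩
  exact le_iSup₂ (f := fun (y : Fin 3 → ℝ) (_ : y ∈ Lambda3) => ∫⁻ x : Fin 3 → ℝ,
    (‖F (fun i => (x i : ℂ) + (y i : ℂ) * Complex.I)‖₊ : ℝ≥0∞) ^ 2) y (hK hy)

theorem bergNorm_eq (ν : ℝ) (G : (Fin 3 → ℂ) → ℂ) : bergNormSqTube ν G =
    ∫⁻ y in Lambda3, NN G y * ENNReal.ofReal (DeltaL y ^ (ν - 3 / 2)) := rfl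

theorem DeltaL_cont : Continuous DeltaL := by unfold DeltaL; fun_prop

theorem LB_berg (ν : ℝ) (G : (Fin 3 → ℂ) → ℂ) (hG : DifferentiableOn ℂ G TLambda3)
    (h : bergNormSqTube ν G < ⊤) : LB G := by
  intro K hK hKL
  obtain ⟨r, hr, hrK⟩ := hK.exists_cthickening_subset_open isOpen_L3 hKL
  obtain ⟨C, hC, hb⟩ := NN_bound G hG r hr
  set K' := Metric.cthickening r K with hK'
  have hKc : IsCompact K' := hK.cthickening
  have hpos : ∀ y ∈ K', 0 < DeltaL y ^ (ν - 3 / 2) := fun y hy =>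
    Real.rpow_pos_of_pos (DeltaL_pos (hrK hy)) _
  have hcont : ContinuousOn (fun y => DeltaL y ^ (ν - 3 / 2)) K' :=
    DeltaL_cont.continuousOn.rpow_const (fun y hy => Or.inl (DeltaL_pos (hrK hy)).ne')
  obtain ⟨d, hd, hdK⟩ : ∃ d : ℝ, 0 < d ∧ ∀ y ∈ K', d ≤ DeltaL y ^ (ν - 3 / 2) := by
    rcases K'.eq_empty_or_nonempty with he | hne
    · exact ⟨1, one_pos, by simp [he]⟩
    · obtain ⟨y, hy, hmin⟩ := hKc.exists_isMinOn hne hcont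
      exact ⟨_, hpos y hy, fun z hz => hmin hz⟩
  refine ⟨C * ((ENNReal.ofReal d)⁻¹ * bergNormSqTube ν G), ?_, fun y hy => ?_⟩
  · refine (ENNReal.mul_ne_top hC.ne (ENNReal.mul_ne_top ?_ h.ne)).lt_top
    simp [hd]
  have hsub : Metric.closedBall y r ⊆ K' := Metric.closedBall_subset_cthickening hy r
  refine (hb y (hsub.trans hrK)).trans ?_
  gcongr
  rw [← ENNReal.div_eq_inv_mul, ENNReal.le_div_iff_mul_le (by simp [hd]) (by simp),
    ← lintegral_mul_const' _ _ ENNReal.ofReal_ne_top, bergNorm_eq]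
  refine (setLIntegral_mono' Metric.isClosed_closedBall.measurableSet fun w hw => ?_).trans
    (lintegral_mono_set (hsub.trans hrK))
  gcongr
  exact hdK w (hsub hw)

/-- exponential transform -/
def ET (g : (Fin 3 → ℝ) → ℂ) (z : Fin 3 → ℂ) : ℂ :=
  ∫ ξ, g ξ * Complex.exp (2 * Real.pi * Complex.I * cip z ξ)

/-- exponential integrability near `y` -/
def E1 (g : (Fin 3 → ℝ) → ℂ) (y : Fin 3 → ℝ) : Prop :=
  ∃ ε : ℝ, 0 < ε ∧ Integrable fun ξ => g ξ * (Real.exp (-(2 * Real.pi * ip y ξ) + ε * ‖ξ‖) : ℂ)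

theorem ip_cont (y : Fin 3 → ℝ) : Continuous (ip y) := by unfold ip; fun_prop

theorem cip_cont (z : Fin 3 → ℂ) : Continuous (cip z) := by unfold cip; fun_prop

theorem ip_add (y w ξ : Fin 3 → ℝ) : ip (y + w) ξ = ip y ξ + ip w ξ := by
  simp [ip]; ring

theorem ip_sub (y w ξ : Fin 3 → ℝ) : ip (y - w) ξ = ip y ξ - ip w ξ := by
  simp [ip]; ring

theorem ip_smul (t : ℝ) (w ξ : Fin 3 → ℝ) : ip (t • w) ξ = t * ip w ξ := by
  simp [ip]; ring

theorem abs_ip_le (w ξ : Fin 3 → ℝ) : |ip w ξ| ≤ 3 * ‖w‖ * ‖ξ‖ := by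
  have h : ∀ i, |w i * ξ i| ≤ ‖w‖ * ‖ξ‖ := by
    intro i
    rw [abs_mul]
    exact mul_le_mul (norm_le_pi_norm w i) (norm_le_pi_norm ξ i) (abs_nonneg _) (norm_nonneg _)
  unfold ip
  have := abs_add_three (w 0 * ξ 0) (w 1 * ξ 1) (w 2 * ξ 2)
  have := h 0; have := h 1; have := h 2
  linarith

theorem cip_im (z : Fin 3 → ℂ) (ξ : Fin 3 → ℝ) : (cip z ξ).im = ip (fun i => (z i).im) ξ := by
  simp [cip, ip]

theorem norm_kexp (z : Fin 3 → ℂ) (ξ : Fin 3 → ℝ) :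
    ‖Complex.exp (2 * Real.pi * Complex.I * cip z ξ)‖ =
      Real.exp (-(2 * Real.pi * ip (fun i => (z i).im) ξ)) := by
  rw [Complex.norm_exp, ← cip_im]
  congr 1
  simp

/-- the linear form attached to `ξ` -/
def cipL (ξ : Fin 3 → ℝ) : (Fin 3 → ℂ) →L[ℂ] ℂ :=
  (ξ 0 : ℂ) • ContinuousLinearMap.proj (R := ℂ) (φ := fun _ : Fin 3 => ℂ) 0 +
  (ξ 1 : ℂ) • ContinuousLinearMap.proj (R := ℂ) (φ := fun _ : Fin 3 => ℂ) 1 +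
  (ξ 2 : ℂ) • ContinuousLinearMap.proj (R := ℂ) (φ := fun _ : Fin 3 => ℂ) 2

theorem cipL_apply (ξ : Fin 3 → ℝ) (z : Fin 3 → ℂ) : cipL ξ z = cip z ξ := by
  simp [cipL, cip]; ring

theorem cipL_cont : Continuous cipL := by unfold cipL; fun_prop

theorem cipL_norm (ξ : Fin 3 → ℝ) : ‖cipL ξ‖ ≤ 3 * ‖ξ‖ := by
  apply ContinuousLinearMap.opNorm_le_bound _ (by positivity)
  intro z
  rw [cipL_apply]
  have h : ∀ i, ‖z i * (ξ i : ℂ)‖ ≤ ‖ξ‖ * ‖z‖ := by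
    intro i
    rw [norm_mul, mul_comm, Complex.norm_real]
    exact mul_le_mul (norm_le_pi_norm ξ i) (norm_le_pi_norm z i) (norm_nonneg _) (norm_nonneg _)
  unfold cip
  have := norm_add₃_le (a := z 0 * (ξ 0 : ℂ)) (b := z 1 * (ξ 1 : ℂ)) (c := z 2 * (ξ 2 : ℂ))
  have := h 0; have := h 1; have := h 2
  linarith

theorem E1_int {g : (Fin 3 → ℝ) → ℂ} {y : Fin 3 → ℝ} (hm : AEStronglyMeasurable g) (h : E1 g y) :
    Integrable fun ξ => g ξ * (Real.exp (-(2 * Real.pi * ip y ξ)) : ℂ) := by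
  obtain ⟨ε, hε, h⟩ := h
  refine h.mono ?_ ?_
  · refine hm.mul (Continuous.aestronglyMeasurable ?_)
    have := ip_cont y
    fun_prop
  · filter_upwards with ξ
    rw [norm_mul, norm_mul, Complex.norm_real, Complex.norm_real, Real.norm_of_nonneg (Real.exp_nonneg _),
      Real.norm_of_nonneg (Real.exp_nonneg _)]
    gcongr
    have := mul_nonneg hε.le (norm_nonneg ξ)
    linarith

theorem ET_hasFDerivAt (g : (Fin 3 → ℝ) → ℂ) (z : Fin 3 → ℂ) (hm : AEStronglyMeasurable g)
    (h : E1 g (fun i => (z i).im)) :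
    HasFDerivAt (ET g) (∫ ξ, (g ξ * Complex.exp (2 * Real.pi * Complex.I * cip z ξ) *
      (2 * Real.pi * Complex.I)) • cipL ξ) z ∧
    Integrable (fun ξ => (g ξ * Complex.exp (2 * Real.pi * Complex.I * cip z ξ) *
      (2 * Real.pi * Complex.I)) • cipL ξ) := by
  have hInt := E1_int hm h
  obtain ⟨ε, hε, h⟩ := h
  have hpi := Real.pi_pos
  set δ := ε / (12 * Real.pi) with hδ
  have hδ0 : 0 < δ := by positivity
  have hbd : ∀ ξ : Fin 3 → ℝ, ∀ w ∈ Metric.ball z δ,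
      ‖(g ξ * Complex.exp (2 * Real.pi * Complex.I * cip w ξ) *
      (2 * Real.pi * Complex.I)) • cipL ξ‖ ≤ (12 * Real.pi / ε) *
        ‖g ξ * (Real.exp (-(2 * Real.pi * ip (fun i => (z i).im) ξ) + ε * ‖ξ‖) : ℂ)‖ := by
    intro ξ w hw
    rw [norm_smul, norm_mul, norm_mul, norm_kexp, norm_mul (g ξ) (Real.exp _ : ℂ), Complex.norm_real,
      Real.norm_of_nonneg (Real.exp_nonneg _)]
    have e1 : ‖(2 * Real.pi * Complex.I : ℂ)‖ = 2 * Real.pi := by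
      simp [abs_of_pos hpi]
    rw [e1]
    have e2 : -(2 * Real.pi * ip (fun i => (w i).im) ξ) ≤
        -(2 * Real.pi * ip (fun i => (z i).im) ξ) + ε / 2 * ‖ξ‖ := by
      have := abs_ip_le ((fun i => (w i).im) - (fun i => (z i).im)) ξ
      rw [ip_sub] at this
      have h3 : ‖(fun i => (w i).im) - (fun i => (z i).im)‖ ≤ δ := by
        rw [pi_norm_le_iff_of_nonneg hδ0.le]
        intro i
        rw [mem_ball_iff_norm] at hw
        have := (norm_le_pi_norm (w - z) i).trans hw.le
        refine le_trans ?_ this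
        have := Complex.abs_im_le_norm ((w - z) i)
        simpa using this
      have h4 : 3 * ‖(fun i => (w i).im) - (fun i => (z i).im)‖ * ‖ξ‖ ≤ 3 * δ * ‖ξ‖ := by gcongr
      have h5 := (abs_le.1 (this.trans h4)).1
      have h6 : 2 * Real.pi * (3 * δ * ‖ξ‖) = ε / 2 * ‖ξ‖ := by rw [hδ]; field_simp; norm_num
      nlinarith
    have e3 : ‖ξ‖ ≤ 2 / ε * Real.exp (ε / 2 * ‖ξ‖) := by
      have := Real.add_one_le_exp (ε / 2 * ‖ξ‖)
      rw [div_mul_eq_mul_div, le_div_iff₀ hε]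
      nlinarith
    calc ‖g ξ‖ * Real.exp (-(2 * Real.pi * ip (fun i => (w i).im) ξ)) * (2 * Real.pi) * ‖cipL ξ‖
        ≤ ‖g ξ‖ * Real.exp (-(2 * Real.pi * ip (fun i => (z i).im) ξ) + ε / 2 * ‖ξ‖) * (2 * Real.pi)
          * (3 * (2 / ε * Real.exp (ε / 2 * ‖ξ‖))) := by
          gcongr
          exact (cipL_norm ξ).trans (by gcongr)
      _ = (12 * Real.pi / ε) * (‖g ξ‖ * (Real.exp (-(2 * Real.pi * ip (fun i => (z i).im) ξ) + ε / 2 * ‖ξ‖)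
          * Real.exp (ε / 2 * ‖ξ‖))) := by ring
      _ = _ := by
          rw [← Real.exp_add]
          congr 3; ring_nf
  have hmF : ∀ w : Fin 3 → ℂ, AEStronglyMeasurable
      (fun ξ => g ξ * Complex.exp (2 * Real.pi * Complex.I * cip w ξ)) := by
    intro w
    refine hm.mul (Continuous.aestronglyMeasurable ?_)
    have := cip_cont w
    fun_prop
  have hmF' : AEStronglyMeasurable (fun ξ => (g ξ * Complex.exp (2 * Real.pi * Complex.I * cip z ξ) *
      (2 * Real.pi * Complex.I)) • cipL ξ) :=
    ((hmF z).mul_const _).smul cipL_cont.aestronglyMeasurable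
  refine ⟨hasFDerivAt_integral_of_dominated_of_fderiv_le
    (F' := fun w ξ => (g ξ * Complex.exp (2 * Real.pi * Complex.I * cip w ξ) *
      (2 * Real.pi * Complex.I)) • cipL ξ) (Metric.ball_mem_nhds z hδ0)
    (Filter.Eventually.of_forall hmF) ?_ hmF' (Filter.Eventually.of_forall hbd)
    (h.norm.const_mul _) ?_, ?_⟩
  · refine hInt.mono (hmF z) ?_
    filter_upwards with ξ
    rw [norm_mul, norm_mul, norm_kexp, Complex.norm_real, Real.norm_of_nonneg (Real.exp_nonneg _)]
  · filter_upwards with ξ w _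
    have h1 : HasFDerivAt (fun w : Fin 3 → ℂ => cip w ξ) (cipL ξ) w := by
      have := (cipL ξ).hasFDerivAt (x := w)
      exact this.congr_of_eventuallyEq (Filter.Eventually.of_forall fun w => (cipL_apply ξ w).symm)
    have h2 := ((h1.const_mul (2 * Real.pi * Complex.I)).cexp).const_mul (g ξ)
    refine h2.congr_fderiv ?_
    simp only [smul_smul]
    congr 1; ring
  · refine (h.norm.const_mul (12 * Real.pi / ε)).mono' hmF' ?_
    filter_upwards with ξ
    exact hbd ξ z (Metric.mem_ball_self hδ0)

theorem ET_pd (g : (Fin 3 → ℝ) → ℂ) (z : Fin 3 → ℂ) (hm : AEStronglyMeasurable g)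
    (h : E1 g (fun i => (z i).im)) (j : Fin 3) :
    pd j (ET g) z = ET (fun ξ => (2 * Real.pi * Complex.I * ξ j) * g ξ) z := by
  obtain ⟨h1, h2⟩ := ET_hasFDerivAt g z hm h
  rw [pd, h1.fderiv, ContinuousLinearMap.integral_apply h2, ET]
  congr 1; ext ξ
  simp only [_root_.smul_apply, cipL_apply, smul_eq_mul]
  have : cip (Pi.single j 1) ξ = ξ j := by
    fin_cases j <;> simp [cip]
  rw [this]; ring

theorem ET_tp (g : (Fin 3 → ℝ) → ℂ) (x y : Fin 3 → ℝ) :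
    ET g (tp x y) = invF (fun ξ => g ξ * (Real.exp (-(2 * Real.pi * ip y ξ)) : ℂ)) x := by
  unfold ET invF
  congr 1; ext ξ
  beta_reduce
  rw [Complex.ofReal_exp, mul_assoc (g ξ), ← Complex.exp_add]
  congr 2
  simp only [cip, tp, ip]
  push_cast
  linear_combination (2 * Real.pi * (y 0 * ξ 0 + y 1 * ξ 1 + y 2 * ξ 2)) * Complex.I_sq

theorem enorm_rexp (a : ℝ) : ‖((Real.exp a : ℝ) : ℂ)‖ₑ = ENNReal.ofReal (Real.exp a) := by
  rw [← ofReal_norm, Complex.norm_real, Real.norm_of_nonneg (Real.exp_nonneg _)]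

theorem slice_memLp (G : (Fin 3 → ℂ) → ℂ) (hG : DifferentiableOn ℂ G TLambda3)
    {y : Fin 3 → ℝ} (hy : y ∈ Lambda3) (hN : NN G y < ⊤) : MemLp (fun x => G (tp x y)) 2 := by
  have hc : Continuous (fun x => G (tp x y)) := by
    have h1 : Continuous (fun x => tp x y) :=
      tp_continuous.comp (by fun_prop : Continuous fun x : Fin 3 → ℝ => (x, y))
    exact hG.continuousOn.comp_continuous h1 (fun x => tp_mem hy)
  refine ⟨hc.aestronglyMeasurable, ?_⟩
  have := eLpNorm_two_sq (μ := volume) (fun x => G (tp x y))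
  have h2 : eLpNorm (fun x => G (tp x y)) 2 volume ^ 2 < ⊤ := by rw [this]; exact hN
  by_contra hc
  rw [not_lt, top_le_iff] at hc
  simp [hc] at h2

theorem E1_of_cc (ψ : (Fin 3 → ℝ) → ℂ) (hc : Continuous ψ) (hs : HasCompactSupport ψ)
    (y : Fin 3 → ℝ) : E1 ψ y := by
  refine ⟨1, one_pos, ?_⟩
  refine Continuous.integrable_of_hasCompactSupport ?_ hs.mul_right
  have := ip_cont y
  fun_prop

theorem PW_pair (G : (Fin 3 → ℂ) → ℂ) (hG : DifferentiableOn ℂ G TLambda3) (hB : LB G)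
    (ψ : (Fin 3 → ℝ) → ℂ) (hc : Continuous ψ) (hs : HasCompactSupport ψ)
    {y y' : Fin 3 → ℝ} (hy : y ∈ Lambda3) (hy' : y' ∈ Lambda3) :
    ∫ x, G (tp x y) * ET ψ (- tp x y) = ∫ x, G (tp x y') * ET ψ (- tp x y') := by
  have hseg : ∀ t ∈ Icc (0 : ℝ) 1, y + t • (y' - y) ∈ Lambda3 := by
    intro t ht
    exact convex_L3.add_smul_sub_mem hy hy' ht
  have hdE : Differentiable ℂ (ET ψ) := fun z =>
    (ET_hasFDerivAt ψ z hc.aestronglyMeasurable (E1_of_cc ψ hc hs _)).1.differentiableAt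
  have hcomp : IsCompact ((fun t : ℝ => y + t • (y' - y)) '' Icc 0 1) :=
    isCompact_Icc.image (by fun_prop)
  obtain ⟨M, hM, hMb⟩ := hB _ hcomp (by rintro _ ⟨t, ht, rfl⟩; exact hseg t ht)
  -- slice norms of the transform
  have hcw : ∀ w : Fin 3 → ℝ, Continuous fun ξ => ψ ξ * (Real.exp (-(2 * Real.pi * ip w ξ)) : ℂ) := by
    intro w
    have := ip_cont w
    fun_prop
  have hsw : ∀ w : Fin 3 → ℝ, HasCompactSupport fun ξ => ψ ξ * (Real.exp (-(2 * Real.pi * ip w ξ)) : ℂ) :=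
    fun w => hs.mul_right
  have hE : ∀ w : Fin 3 → ℝ, ∫⁻ x, ‖ET ψ (- tp x w)‖ₑ ^ 2 =
      ∫⁻ ξ, ‖ψ ξ * (Real.exp (-(2 * Real.pi * ip (-w) ξ)) : ℂ)‖ₑ ^ 2 := by
    intro w
    have e : ∀ x, ET ψ (- tp x w) = ET ψ (tp (-x) (-w)) := by
      intro x; congr 1; ext i; simp [tp]; ring
    simp only [e, ET_tp]
    rw [← (plancherel_P _ ((hcw (-w)).integrable_of_hasCompactSupport (hsw (-w)))
      ((hcw (-w)).memLp_of_hasCompactSupport (hsw (-w)))).2]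
    exact lintegral_neg_eq_self (μ := volume)
      (fun x => ‖invF (fun ξ => ψ ξ * (Real.exp (-(2 * Real.pi * ip (-w) ξ)) : ℂ)) x‖ₑ ^ 2)
  set A : (Fin 3 → ℝ) → ℝ≥0∞ := fun w => ∫⁻ ξ, ‖ψ ξ * (Real.exp (-(2 * Real.pi * ip (-w) ξ)) : ℂ)‖ₑ ^ 2 with hA
  have hAfin : ∀ w, A w < ⊤ := by
    intro w
    rw [hA]; beta_reduce
    rw [← eLpNorm_two_sq]
    exact ENNReal.pow_lt_top ((hcw (-w)).memLp_of_hasCompactSupport (hsw (-w))).2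
  have hAb : ∀ t ∈ Icc (0 : ℝ) 1, A (y + t • (y' - y)) ≤ A y + A y' := by
    intro t ht
    rw [hA]; beta_reduce
    rw [← lintegral_add_left (by
      have := hcw (-y)
      exact this.enorm.measurable.pow_const 2)]
    refine lintegral_mono fun ξ => ?_
    simp only [enorm_mul, mul_pow, ← mul_add]
    gcongr
    set a := -(2 * Real.pi * ip (-y) ξ)
    set b := -(2 * Real.pi * ip (-y') ξ)
    have e : -(2 * Real.pi * ip (-(y + t • (y' - y))) ξ) = (1 - t) * a + t * b := by
      simp only [a, b, ip, Pi.neg_apply, Pi.add_apply, Pi.smul_apply, Pi.sub_apply, smul_eq_mul]; ring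
    rw [e]
    rcases le_total a b with hab | hab
    · refine le_add_left ?_
      gcongr
      rw [enorm_rexp, enorm_rexp]
      gcongr
      nlinarith [ht.1, ht.2]
    · refine le_add_right ?_
      gcongr
      rw [enorm_rexp, enorm_rexp]
      gcongr
      nlinarith [ht.1, ht.2]
  have := shift_const (fun z => G z * ET ψ (-z)) (hG.mul ((hdE.comp (g := ET ψ) (f := fun z : Fin 3 → ℂ => -z) differentiable_id.neg).differentiableOn))
    y (y' - y) hseg (M + (A y + A y')) (by simp [hM, hAfin]) (by
      intro t ht
      set w := y + t • (y' - y)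
      have hcG : Continuous (fun x => G (tp x w)) := by
        have h1 : Continuous (fun x => tp x w) :=
          tp_continuous.comp (by fun_prop : Continuous fun x : Fin 3 → ℝ => (x, w))
        exact hG.continuousOn.comp_continuous h1 (fun x => tp_mem (hseg t ht))
      calc ∫⁻ x, ‖G (tp x w) * ET ψ (-tp x w)‖ₑ ≤
          ∫⁻ x, (‖G (tp x w)‖ₑ ^ 2 + ‖ET ψ (-tp x w)‖ₑ ^ 2) := by
            refine lintegral_mono fun x => ?_
            beta_reduce
            rw [enorm_mul]
            rcases le_total ‖G (tp x w)‖ₑ ‖ET ψ (-tp x w)‖ₑ with hh | hh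
            · refine le_add_left ?_
              rw [pow_two]; gcongr
            · refine le_add_right ?_
              rw [pow_two]; gcongr
        _ = NN G w + A w := by
            rw [lintegral_add_left (hcG.enorm.measurable.pow_const 2), hE]
            rfl
        _ ≤ _ := add_le_add (hMb w ⟨t, ht, rfl⟩) (hAb t ht))
  simpa using this

theorem PW (G : (Fin 3 → ℂ) → ℂ) (hG : DifferentiableOn ℂ G TLambda3) (hB : LB G) :
    ∃ g : (Fin 3 → ℝ) → ℂ, AEStronglyMeasurable g ∧ ∀ y ∈ Lambda3,
      MemLp (fun ξ => g ξ * (Real.exp (-(2 * Real.pi * ip y ξ)) : ℂ)) 2 ∧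
      NN G y = ∫⁻ ξ, ‖g ξ * (Real.exp (-(2 * Real.pi * ip y ξ)) : ℂ)‖ₑ ^ 2 ∧
      (Integrable (fun ξ => g ξ * (Real.exp (-(2 * Real.pi * ip y ξ)) : ℂ)) →
        ∀ x, G (tp x y) = ET g (tp x y)) := by
  have hN : ∀ y ∈ Lambda3, NN G y < ⊤ := by
    intro y hy
    obtain ⟨M, hM, h⟩ := hB {y} isCompact_singleton (by simpa using hy)
    exact (h y rfl).trans_lt hM
  have hpk : ∀ y : Lambda3, _ := fun y => fourier_package _ (slice_memLp G hG y.2 (hN y y.2))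
  choose fh h1 h2 h3 h4 using hpk
  have hce : ∀ y, Continuous fun ξ => (Real.exp (2 * Real.pi * ip y ξ) : ℂ) := by
    intro y
    have := ip_cont y
    fun_prop
  have hce' : ∀ y, Continuous fun ξ => (Real.exp (-(2 * Real.pi * ip y ξ)) : ℂ) := by
    intro y
    have := ip_cont y
    fun_prop
  have hli : ∀ y : Lambda3, LocallyIntegrable (fun ξ => fh y ξ * (Real.exp (2 * Real.pi * ip y ξ) : ℂ)) := by
    intro y
    have := ((h1 y).locallyIntegrable one_le_two).smul_continuous (hce y)
    simpa only [smul_eq_mul] using this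
  have hpair : ∀ (y : Lambda3) (ψ : (Fin 3 → ℝ) → ℂ), Continuous ψ → HasCompactSupport ψ →
      ∫ ξ, ψ ξ * (fh y ξ * (Real.exp (2 * Real.pi * ip y ξ) : ℂ)) =
        ∫ x, G (tp x y) * ET ψ (- tp x y) := by
    intro y ψ hc hs
    have hc2 : Continuous (fun ξ => ψ ξ * (Real.exp (2 * Real.pi * ip y ξ) : ℂ)) := hc.mul (hce y)
    have hs2 : HasCompactSupport (fun ξ => ψ ξ * (Real.exp (2 * Real.pi * ip y ξ) : ℂ)) := hs.mul_right
    have := h3 y _ (hc2.integrable_of_hasCompactSupport hs2) (hc2.memLp_of_hasCompactSupport hs2)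
    calc _ = ∫ ξ, fh y ξ * (ψ ξ * (Real.exp (2 * Real.pi * ip y ξ) : ℂ)) := by
          congr 1; ext ξ; ring
      _ = _ := by
          rw [this]
          congr 1; ext x
          congr 1
          unfold ET
          congr 1; ext ξ
          rw [Complex.ofReal_exp, mul_assoc (ψ ξ), ← Complex.exp_add]
          congr 2
          simp only [cip, tp, ip, Pi.neg_apply]
          push_cast
          linear_combination (2 * Real.pi * ((y : Fin 3 → ℝ) 0 * ξ 0 + (y : Fin 3 → ℝ) 1 * ξ 1 + (y : Fin 3 → ℝ) 2 * ξ 2)) * Complex.I_sq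
  have hae : ∀ y y' : Lambda3, ∀ᵐ ξ, fh y ξ * (Real.exp (2 * Real.pi * ip y ξ) : ℂ) =
      fh y' ξ * (Real.exp (2 * Real.pi * ip y' ξ) : ℂ) := by
    intro y y'
    refine ae_eq_of_integral_contDiff_smul_eq (hli y) (hli y') ?_
    intro g hg hgs
    have hc : Continuous fun ξ => (g ξ : ℂ) := Complex.continuous_ofReal.comp hg.continuous
    have hs : HasCompactSupport fun ξ => (g ξ : ℂ) := hgs.comp_left Complex.ofReal_zero
    have := (hpair y _ hc hs).trans ((PW_pair G hG hB _ hc hs y.2 y'.2).trans (hpair y' _ hc hs).symm)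
    simpa only [Complex.real_smul] using this
  set o : Lambda3 := ⟨e0, e0_mem⟩ with ho
  refine ⟨fun ξ => fh o ξ * (Real.exp (2 * Real.pi * ip o ξ) : ℂ),
    (h1 o).1.mul (hce o).aestronglyMeasurable, ?_⟩
  intro y hy
  have hy' : (fun ξ => fh o ξ * (Real.exp (2 * Real.pi * ip o ξ) : ℂ) *
      (Real.exp (-(2 * Real.pi * ip y ξ)) : ℂ)) =ᵐ[volume] fh ⟨y, hy⟩ := by
    filter_upwards [hae o ⟨y, hy⟩] with ξ hξ
    rw [hξ, mul_assoc, ← Complex.ofReal_mul, ← Real.exp_add]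
    simp
  refine ⟨(memLp_congr_ae hy').2 (h1 _), ?_, ?_⟩
  · rw [NN, ← h2 ⟨y, hy⟩]
    refine lintegral_congr_ae ?_
    filter_upwards [hy'] with ξ hξ
    rw [hξ]
  · intro hInt
    have hInt2 := (integrable_congr hy').1 hInt
    have hG1 := h4 ⟨y, hy⟩ hInt2
    have hcG : Continuous (fun x => G (tp x y)) := by
      have h1 : Continuous (fun x => tp x y) :=
        tp_continuous.comp (by fun_prop : Continuous fun x : Fin 3 → ℝ => (x, y))
      exact hG.continuousOn.comp_continuous h1 (fun x => tp_mem hy)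
    have einv : ∀ x, invF (fh ⟨y, hy⟩) x = ET (fun ξ => fh o ξ * (Real.exp (2 * Real.pi * ip o ξ) : ℂ)) (tp x y) := by
      intro x
      rw [ET_tp]
      unfold invF
      refine integral_congr_ae ?_
      filter_upwards [hy'] with ξ hξ
      rw [hξ]
    have hcI : Continuous (invF (fh ⟨y, hy⟩)) := by
      unfold invF
      refine continuous_of_dominated (bound := fun ξ => ‖fh ⟨y, hy⟩ ξ‖) ?_ ?_ hInt2.norm ?_
      · intro x
        refine hInt2.1.mul (Continuous.aestronglyMeasurable ?_)
        have := ip_cont x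
        fun_prop
      · intro x
        filter_upwards with ξ
        rw [norm_mul, show (2 * Real.pi * Complex.I * ip x ξ : ℂ) = ((2 * Real.pi * ip x ξ : ℝ) : ℂ) * Complex.I by
          push_cast; ring, Complex.norm_exp_ofReal_mul_I, mul_one]
      · filter_upwards with ξ
        unfold ip
        fun_prop
    have := (Continuous.ae_eq_iff_eq volume hcG hcI).1 hG1
    intro x
    rw [← einv, ← this]

/-- admissible densities -/
structure Adm (g : (Fin 3 → ℝ) → ℂ) : Prop where
  supp : ∀ ξ, ξ ∉ Lambda3 → g ξ = 0
  meas : AEStronglyMeasurable g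
  l2 : ∀ y ∈ Lambda3, MemLp (fun ξ => g ξ * (Real.exp (-(2 * Real.pi * ip y ξ)) : ℂ)) 2

theorem norm_L3 {ξ : Fin 3 → ℝ} (h : ξ ∈ Lambda3) : ‖ξ‖ ≤ ξ 0 := by
  obtain ⟨h0, _, _, h1, h2⟩ := L3_pos h
  rw [pi_norm_le_iff_of_nonneg h0.le]
  intro i
  fin_cases i
  · simp [abs_of_pos h0]
  · simpa using h1.le
  · simpa using h2.le

theorem dec_memLp : MemLp (fun ξ : Fin 3 → ℝ => (((1 + ‖ξ‖) ^ (-2 : ℝ) : ℝ) : ℂ)) 2 := by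
  have hc : Continuous (fun ξ : Fin 3 → ℝ => (((1 + ‖ξ‖) ^ (-2 : ℝ) : ℝ) : ℂ)) := by
    refine Complex.continuous_ofReal.comp ?_
    refine Continuous.rpow_const (by fun_prop) (fun ξ => Or.inl ?_)
    positivity
  rw [memLp_two_iff_integrable_sq_norm hc.aestronglyMeasurable]
  have := integrable_one_add_norm (E := Fin 3 → ℝ) (μ := volume) (r := 4) (by simp; norm_num)
  refine this.congr (Filter.Eventually.of_forall fun ξ => ?_)
  have h0 : (0 : ℝ) < 1 + ‖ξ‖ := by positivity
  beta_reduce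
  rw [Complex.norm_real, Real.norm_of_nonneg (by positivity), ← Real.rpow_mul_natCast h0.le]
  norm_num

theorem exp_dec (a : ℝ) (ha : 0 < a) (t : ℝ) (ht : 0 ≤ t) :
    Real.exp (-(a * t)) ≤ (2 * Real.exp a / a ^ 2) * (1 + t) ^ (-2 : ℝ) := by
  have h := Real.pow_div_factorial_le_exp (a * (1 + t)) (by positivity) 2
  have h0 : (0 : ℝ) < 1 + t := by positivity
  rw [Real.rpow_neg h0.le, Real.rpow_two, ← div_eq_mul_inv, le_div_iff₀ (by positivity),
    le_div_iff₀ (by positivity)]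
  have e : Real.exp (a * (1 + t)) = Real.exp a * Real.exp (a * t) := by
    rw [← Real.exp_add]; ring_nf
  have e2 : Real.exp (-(a * t)) * Real.exp (a * t) = 1 := by
    rw [← Real.exp_add]; simp
  rw [e] at h
  simp only [Nat.factorial, mul_pow] at h
  norm_num at h
  have h5 : a ^ 2 * (1 + t) ^ 2 ≤ 2 * (Real.exp a * Real.exp (a * t)) := by linarith
  calc Real.exp (-(a * t)) * (1 + t) ^ 2 * a ^ 2 = Real.exp (-(a * t)) * (a ^ 2 * (1 + t) ^ 2) := by ring
    _ ≤ Real.exp (-(a * t)) * (2 * (Real.exp a * Real.exp (a * t))) := by gcongr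
    _ = 2 * Real.exp a * (Real.exp (-(a * t)) * Real.exp (a * t)) := by ring
    _ = _ := by rw [e2, mul_one]

theorem Adm.e1 {g : (Fin 3 → ℝ) → ℂ} (h : Adm g) {y : Fin 3 → ℝ} (hy : y ∈ Lambda3) : E1 g y := by
  obtain ⟨δ, hδ, hyδ⟩ := exists_sub_mem hy
  have hpi := Real.pi_pos
  refine ⟨Real.pi * δ, by positivity, ?_⟩
  have hI := (h.l2 _ hyδ).integrable_mul dec_memLp
  have ha : 0 < Real.pi * δ := by positivity
  refine (hI.norm.const_mul (2 * Real.exp (Real.pi * δ) / (Real.pi * δ) ^ 2)).mono' ?_ ?_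
  · refine h.meas.mul (Continuous.aestronglyMeasurable ?_)
    have := ip_cont y
    fun_prop
  · filter_upwards with ξ
    by_cases hξ : ξ ∈ Lambda3
    · have hn := norm_L3 hξ
      simp only [Pi.mul_apply]
      rw [norm_mul, norm_mul, norm_mul, Complex.norm_real, Complex.norm_real, Complex.norm_real,
        Real.norm_of_nonneg (Real.exp_nonneg _), Real.norm_of_nonneg (Real.exp_nonneg _),
        Real.norm_of_nonneg (by positivity)]
      have h1 := exp_dec _ ha ‖ξ‖ (norm_nonneg _)
      calc ‖g ξ‖ * Real.exp (-(2 * Real.pi * ip y ξ) + Real.pi * δ * ‖ξ‖) ≤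
          ‖g ξ‖ * (Real.exp (-(2 * Real.pi * ip (y - δ • e0) ξ)) * Real.exp (-(Real.pi * δ * ‖ξ‖))) := by
            rw [← Real.exp_add]
            refine mul_le_mul_of_nonneg_left (Real.exp_le_exp.2 ?_) (norm_nonneg _)
            rw [ip_sub, ip_smul, ip_e0]
            nlinarith [mul_le_mul_of_nonneg_left hn ha.le]
        _ ≤ ‖g ξ‖ * (Real.exp (-(2 * Real.pi * ip (y - δ • e0) ξ)) *
              ((2 * Real.exp (Real.pi * δ) / (Real.pi * δ) ^ 2) * (1 + ‖ξ‖) ^ (-2 : ℝ))) := by gcongr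
        _ = _ := by ring
    · rw [h.supp ξ hξ, zero_mul, norm_zero]
      positivity

theorem Adm.mul {g : (Fin 3 → ℝ) → ℂ} (h : Adm g) {k : (Fin 3 → ℝ) → ℂ} (hk : Continuous k)
    {C : ℝ} (hC : ∀ ξ, ‖k ξ‖ ≤ C * ‖ξ‖) : Adm (fun ξ => k ξ * g ξ) := by
  refine ⟨fun ξ hξ => by simp [h.supp ξ hξ], hk.aestronglyMeasurable.mul h.meas, fun y hy => ?_⟩
  obtain ⟨δ, hδ, hyδ⟩ := exists_sub_mem hy
  have hpi := Real.pi_pos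
  have hC0 : 0 ≤ C := by
    have := (norm_nonneg _).trans (hC e0)
    refine nonneg_of_mul_nonneg_left this ?_
    rw [norm_pos_iff]
    intro h0
    have := congrFun h0 0
    simp [e0] at this
  refine (h.l2 _ hyδ).of_le_mul (c := C / (2 * Real.pi * δ)) ?_ ?_
  · refine (hk.aestronglyMeasurable.mul h.meas).mul (Continuous.aestronglyMeasurable ?_)
    have := ip_cont y
    fun_prop
  · filter_upwards with ξ
    by_cases hξ : ξ ∈ Lambda3
    · have hn := norm_L3 hξ
      rw [norm_mul, norm_mul, norm_mul, Complex.norm_real, Complex.norm_real,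
        Real.norm_of_nonneg (Real.exp_nonneg _), Real.norm_of_nonneg (Real.exp_nonneg _)]
      have e : -(2 * Real.pi * ip y ξ) = -(2 * Real.pi * ip (y - δ • e0) ξ) + -(2 * Real.pi * δ * ξ 0) := by
        rw [ip_sub, ip_smul, ip_e0]; ring
      rw [e, Real.exp_add]
      have h1 : ξ 0 * Real.exp (-(2 * Real.pi * δ * ξ 0)) ≤ 1 / (2 * Real.pi * δ) := by
        rw [le_div_iff₀ (by positivity)]
        have h2 := Real.add_one_le_exp (2 * Real.pi * δ * ξ 0)
        have h3 : Real.exp (2 * Real.pi * δ * ξ 0) * Real.exp (-(2 * Real.pi * δ * ξ 0)) = 1 := by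
          rw [← Real.exp_add]; simp
        have h4 := Real.exp_pos (-(2 * Real.pi * δ * ξ 0))
        nlinarith
      calc ‖k ξ‖ * ‖g ξ‖ * (Real.exp (-(2 * Real.pi * ip (y - δ • e0) ξ)) * Real.exp (-(2 * Real.pi * δ * ξ 0)))
          ≤ (C * ξ 0) * ‖g ξ‖ * (Real.exp (-(2 * Real.pi * ip (y - δ • e0) ξ)) * Real.exp (-(2 * Real.pi * δ * ξ 0))) := by
            gcongr
            exact (hC ξ).trans (by gcongr)
        _ = C * (‖g ξ‖ * Real.exp (-(2 * Real.pi * ip (y - δ • e0) ξ))) * (ξ 0 * Real.exp (-(2 * Real.pi * δ * ξ 0))) := by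
            ring
        _ ≤ C * (‖g ξ‖ * Real.exp (-(2 * Real.pi * ip (y - δ • e0) ξ))) * (1 / (2 * Real.pi * δ)) := by
            gcongr
        _ = _ := by ring
    · rw [h.supp ξ hξ]
      simp

theorem Adm.coord {g : (Fin 3 → ℝ) → ℂ} (h : Adm g) (j : Fin 3) :
    Adm (fun ξ => (2 * Real.pi * Complex.I * ξ j) * g ξ) := by
  refine h.mul (C := 2 * Real.pi) (by fun_prop) fun ξ => ?_
  have := norm_le_pi_norm ξ j
  simp only [norm_mul, Complex.norm_real, Complex.norm_I, mul_one, Complex.norm_ofNat,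
    Real.norm_of_nonneg Real.pi_pos.le]
  gcongr

theorem Adm.add {g f : (Fin 3 → ℝ) → ℂ} (h : Adm g) (h' : Adm f) : Adm (fun ξ => g ξ + f ξ) := by
  refine ⟨fun ξ hξ => by simp [h.supp ξ hξ, h'.supp ξ hξ], h.meas.add h'.meas, fun y hy => ?_⟩
  refine ((h.l2 y hy).add (h'.l2 y hy)).congr_norm ?_ ?_
  · refine (h.meas.add h'.meas).mul (Continuous.aestronglyMeasurable ?_)
    have := ip_cont y
    fun_prop
  · filter_upwards with ξ
    simp [add_mul]

theorem Adm.neg {g : (Fin 3 → ℝ) → ℂ} (h : Adm g) : Adm (fun ξ => - g ξ) := by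
  refine ⟨fun ξ hξ => by simp [h.supp ξ hξ], h.meas.neg, fun y hy => ?_⟩
  have := (h.l2 y hy).neg
  refine this.congr_norm ?_ ?_
  · refine h.meas.neg.mul (Continuous.aestronglyMeasurable ?_)
    have := ip_cont y
    fun_prop
  · filter_upwards with ξ
    simp

theorem Adm.integrable {g : (Fin 3 → ℝ) → ℂ} (h : Adm g) {z : Fin 3 → ℂ} (hz : z ∈ TLambda3) :
    Integrable (fun ξ => g ξ * Complex.exp (2 * Real.pi * Complex.I * cip z ξ)) := by
  refine (E1_int h.meas (h.e1 (y := fun i => (z i).im) hz)).mono ?_ ?_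
  · refine h.meas.mul (Continuous.aestronglyMeasurable ?_)
    have := cip_cont z
    fun_prop
  · filter_upwards with ξ
    rw [norm_mul, norm_mul, norm_kexp, Complex.norm_real, Real.norm_of_nonneg (Real.exp_nonneg _)]

theorem Adm.diff {g : (Fin 3 → ℝ) → ℂ} (h : Adm g) : DifferentiableOn ℂ (ET g) TLambda3 :=
  fun z hz => (ET_hasFDerivAt g z h.meas (h.e1 (y := fun i => (z i).im) hz)).1.differentiableAt.differentiableWithinAt

theorem pd_congr {F H : (Fin 3 → ℂ) → ℂ} (h : EqOn F H TLambda3) (j : Fin 3) :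
    EqOn (pd j F) (pd j H) TLambda3 := by
  intro z hz
  have : F =ᶠ[nhds z] H := Filter.eventually_of_mem (isOpen_T3.mem_nhds hz) h
  simp only [pd, this.fderiv_eq]

theorem Box_congr {F H : (Fin 3 → ℂ) → ℂ} (h : EqOn F H TLambda3) :
    EqOn (Box F) (Box H) TLambda3 := by
  intro z hz
  simp only [Box, pd_congr (pd_congr h _) _ hz]

theorem Adm.pd2 {g : (Fin 3 → ℝ) → ℂ} (h : Adm g) (j : Fin 3) {z : Fin 3 → ℂ} (hz : z ∈ TLambda3) :
    pd j (pd j (ET g)) z =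
      ET (fun ξ => (2 * Real.pi * Complex.I * ξ j) * ((2 * Real.pi * Complex.I * ξ j) * g ξ)) z := by
  have h1 : EqOn (pd j (ET g)) (ET (fun ξ => (2 * Real.pi * Complex.I * ξ j) * g ξ)) TLambda3 :=
    fun w hw => ET_pd g w h.meas (h.e1 (y := fun i => (w i).im) hw) j
  rw [pd_congr h1 j hz]
  exact ET_pd _ z (h.coord j).meas ((h.coord j).e1 (y := fun i => (z i).im) hz) j

theorem ET_add {g f : (Fin 3 → ℝ) → ℂ} (h : Adm g) (h' : Adm f) {z : Fin 3 → ℂ} (hz : z ∈ TLambda3) :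
    ET (fun ξ => g ξ + f ξ) z = ET g z + ET f z := by
  unfold ET
  rw [← integral_add (h.integrable hz) (h'.integrable hz)]
  congr 1; ext ξ; ring

theorem ET_neg {g : (Fin 3 → ℝ) → ℂ} {z : Fin 3 → ℂ}  :
    ET (fun ξ => - g ξ) z = - ET g z := by
  unfold ET
  rw [← integral_neg]
  congr 1; ext ξ; ring

theorem Adm.box {g : (Fin 3 → ℝ) → ℂ} (h : Adm g) :
    Adm (fun ξ => ((4 * Real.pi ^ 2 * DeltaL ξ : ℝ) : ℂ) * g ξ) ∧
      EqOn (Box (ET g)) (ET (fun ξ => ((4 * Real.pi ^ 2 * DeltaL ξ : ℝ) : ℂ) * g ξ)) TLambda3 := by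
  have e : (fun ξ => ((4 * Real.pi ^ 2 * DeltaL ξ : ℝ) : ℂ) * g ξ) = fun ξ =>
      (-((2 * Real.pi * Complex.I * ξ 0) * ((2 * Real.pi * Complex.I * ξ 0) * g ξ)) +
      (2 * Real.pi * Complex.I * ξ 1) * ((2 * Real.pi * Complex.I * ξ 1) * g ξ)) +
      (2 * Real.pi * Complex.I * ξ 2) * ((2 * Real.pi * Complex.I * ξ 2) * g ξ) := by
    ext ξ
    simp only [DeltaL]
    push_cast
    linear_combination (4 * Real.pi ^ 2 * (ξ 0 ^ 2 - ξ 1 ^ 2 - ξ 2 ^ 2) * g ξ) * Complex.I_sq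
  have a0 := ((h.coord 0).coord 0).neg
  have a1 := (h.coord 1).coord 1
  have a2 := (h.coord 2).coord 2
  rw [e]
  refine ⟨(a0.add a1).add a2, fun z hz => ?_⟩
  rw [ET_add (a0.add a1) a2 hz, ET_add a0 a1 hz, ET_neg, Box, h.pd2 0 hz, h.pd2 1 hz, h.pd2 2 hz]

theorem Adm.box_iter {g : (Fin 3 → ℝ) → ℂ} (h : Adm g) (m : ℕ) :
    Adm (fun ξ => (((4 * Real.pi ^ 2 * DeltaL ξ) ^ m : ℝ) : ℂ) * g ξ) ∧
      ∀ F, EqOn F (ET g) TLambda3 →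
      EqOn (Box^[m] F) (ET (fun ξ => (((4 * Real.pi ^ 2 * DeltaL ξ) ^ m : ℝ) : ℂ) * g ξ)) TLambda3 := by
  induction m with
  | zero => simpa using h
  | succ n ih =>
    have hb := ih.1.box
    have e : (fun ξ => (((4 * Real.pi ^ 2 * DeltaL ξ) ^ (n + 1) : ℝ) : ℂ) * g ξ) =
      fun ξ => ((4 * Real.pi ^ 2 * DeltaL ξ : ℝ) : ℂ) * ((((4 * Real.pi ^ 2 * DeltaL ξ) ^ n : ℝ) : ℂ) * g ξ) := by
      ext ξ; push_cast; ring
    rw [e]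
    refine ⟨hb.1, fun F hF => ?_⟩
    rw [Function.iterate_succ_apply']
    exact (Box_congr (ih.2 F hF)).trans hb.2

theorem Adm.NN {g : (Fin 3 → ℝ) → ℂ} (h : Adm g) {y : Fin 3 → ℝ} (hy : y ∈ Lambda3) :
    NN (ET g) y = ∫⁻ ξ, ‖g ξ‖ₑ ^ 2 * ENNReal.ofReal (Real.exp (-(4 * Real.pi * ip y ξ))) := by
  unfold _root_.NN
  simp only [ET_tp]
  rw [(plancherel_P _ (E1_int h.meas (h.e1 hy)) (h.l2 y hy)).2]
  refine lintegral_congr fun ξ => ?_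
  rw [enorm_mul, mul_pow, enorm_rexp, ← ENNReal.ofReal_pow (Real.exp_nonneg _), ← Real.exp_nat_mul]
  congr 3
  push_cast; ring_nf

/-- the Laplace transform of the power of the determinant -/
def KK (α : ℝ) (ξ : Fin 3 → ℝ) : ℝ≥0∞ :=
  ∫⁻ y in Lambda3, ENNReal.ofReal (Real.exp (-(4 * Real.pi * ip y ξ))) * ENNReal.ofReal (DeltaL y ^ α)

/-- integrand with indicator -/
def KI (α : ℝ) (ξ : Fin 3 → ℝ) : (Fin 3 → ℝ) → ℝ≥0∞ := Lambda3.indicator fun y =>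
  ENNReal.ofReal (Real.exp (-(4 * Real.pi * ip y ξ))) * ENNReal.ofReal (DeltaL y ^ α)

theorem KK_eq (α : ℝ) (ξ : Fin 3 → ℝ) : KK α ξ = ∫⁻ y, KI α ξ y := by
  rw [KI, lintegral_indicator measurableSet_L3]; rfl

theorem KI_core_meas (α : ℝ) : Measurable fun p : (Fin 3 → ℝ) × (Fin 3 → ℝ) =>
    ENNReal.ofReal (Real.exp (-(4 * Real.pi * ip p.1 p.2))) * ENNReal.ofReal (DeltaL p.1 ^ α) := by
  unfold ip
  have := DeltaL_cont.measurable
  fun_prop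

theorem KI_core_meas' (α : ℝ) (ξ : Fin 3 → ℝ) : Measurable fun y : Fin 3 → ℝ =>
    ENNReal.ofReal (Real.exp (-(4 * Real.pi * ip y ξ))) * ENNReal.ofReal (DeltaL y ^ α) := by
  unfold ip
  have := DeltaL_cont.measurable
  fun_prop

theorem KI_meas (α : ℝ) (ξ : Fin 3 → ℝ) : Measurable (KI α ξ) := by
  refine Measurable.indicator ?_ measurableSet_L3
  exact KI_core_meas' α ξ

theorem KK_pos (α : ℝ) (ξ : Fin 3 → ℝ) : 0 < KK α ξ := by
  rw [KK, setLIntegral_pos_iff (KI_core_meas' α ξ)]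
  have : Lambda3 ⊆ Function.support (fun y => ENNReal.ofReal (Real.exp (-(4 * Real.pi * ip y ξ))) *
      ENNReal.ofReal (DeltaL y ^ α)) := by
    intro y hy
    have h1 := Real.rpow_pos_of_pos (DeltaL_pos hy) α
    simp [Real.exp_pos, h1]
  refine lt_of_lt_of_le (isOpen_L3.measure_pos volume ⟨e0, e0_mem⟩) (measure_mono ?_)
  exact subset_inter this subset_rfl

theorem DeltaL_add_le {y w : Fin 3 → ℝ} (hy : y ∈ Lambda3) (hw : w ∈ Lambda3) :
    DeltaL y ≤ DeltaL (y + w) := by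
  have h1 := DeltaL_pos hw
  have hw' : ![w 0, - w 1, - w 2] ∈ Lambda3 := by
    obtain ⟨_, _, h3, _⟩ := L3_pos hw
    refine ⟨by simpa using h3, ?_⟩
    have := hw.2
    simpa using this
  have h2 := ip_pos hy hw'
  simp [ip] at h2
  simp only [DeltaL, Pi.add_apply] at *
  nlinarith

theorem KK_top {α : ℝ} (hα : 0 ≤ α) {ξ : Fin 3 → ℝ} (hξ : ξ ∉ closure Lambda3) : KK α ξ = ⊤ := by
  obtain ⟨w, hw, hneg⟩ := exists_neg_ip hξ
  by_contra hfin
  have hpi := Real.pi_pos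
  set l := Real.exp (-(4 * Real.pi * ip w ξ)) with hl
  have hl1 : 1 < l := by
    rw [hl, Real.one_lt_exp_iff]
    nlinarith
  have key : ENNReal.ofReal l * KK α ξ ≤ KK α ξ := by
    rw [KK_eq]
    nth_rewrite 2 [← lintegral_add_right_eq_self (μ := volume) (KI α ξ) w]
    rw [← lintegral_const_mul' _ _ ENNReal.ofReal_ne_top]
    refine lintegral_mono fun y => ?_
    by_cases hy : y ∈ Lambda3
    · rw [KI, indicator_of_mem hy, indicator_of_mem (L3_add hy hw), ip_add, ← mul_assoc,
        ← ENNReal.ofReal_mul (by positivity), hl, ← Real.exp_add]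
      gcongr
      · apply le_of_eq; ring
      · exact (DeltaL_pos hy).le
      · exact DeltaL_add_le hy hw
    · rw [KI, indicator_of_notMem hy]; simp
  have h3 : KK α ξ * 1 < KK α ξ * ENNReal.ofReal l := by
    rw [ENNReal.mul_lt_mul_iff_right (KK_pos α ξ).ne' hfin]
    rwa [ENNReal.one_lt_ofReal]
  rw [mul_one, mul_comm] at h3
  exact absurd key (not_le.2 h3)

theorem KK_e0_lt (n : ℕ) {α : ℝ} (hα : 0 ≤ α) (hn : 2 * α ≤ n) : KK α e0 < ⊤ := by
  have hpi := Real.pi_pos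
  have h1 : Integrable (fun ξ : Fin 3 → ℝ => (1 + ‖ξ‖) ^ (-(4 : ℝ))) volume :=
    integrable_one_add_norm (E := Fin 3 → ℝ) (μ := volume) (r := 4) (by simp; norm_num)
  set C : ℝ := (n + 4).factorial * Real.exp 1 with hC
  have h2 := (h1.const_mul C).lintegral_lt_top
  refine lt_of_le_of_lt ?_ h2
  rw [KK]
  refine (setLIntegral_mono' measurableSet_L3 fun y hy => ?_).trans (setLIntegral_le_lintegral _ _)
  obtain ⟨h0, _, _, _⟩ := L3_pos hy
  rw [← ENNReal.ofReal_mul (by positivity), show ip y e0 = y 0 by simp [ip, e0]]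
  apply ENNReal.ofReal_le_ofReal
  have hnorm := norm_L3 hy
  have d1 : DeltaL y ≤ (1 + y 0) ^ (2 : ℝ) := by
    rw [Real.rpow_two]
    simp only [DeltaL]
    nlinarith [sq_nonneg (y 1), sq_nonneg (y 2)]
  have d2 : DeltaL y ^ α ≤ (1 + y 0) ^ n := by
    calc DeltaL y ^ α ≤ ((1 + y 0) ^ (2 : ℝ)) ^ α := Real.rpow_le_rpow (DeltaL_pos hy).le d1 hα
      _ = (1 + y 0) ^ (2 * α) := by rw [← Real.rpow_mul (by positivity)]
      _ ≤ (1 + y 0) ^ (n : ℝ) := Real.rpow_le_rpow_of_exponent_le (by linarith) hn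
      _ = _ := Real.rpow_natCast _ _
  have d3 := Real.pow_div_factorial_le_exp (1 + y 0) (by positivity) (n + 4)
  rw [div_le_iff₀ (by positivity)] at d3
  have d4 : (1 + ‖y‖) ^ (-(4 : ℝ)) ≥ (1 + y 0) ^ (-(4 : ℝ)) :=
    Real.rpow_le_rpow_of_nonpos (by positivity) (by linarith) (by norm_num)
  have d5 : Real.exp (-(4 * Real.pi * y 0)) ≤ Real.exp (- y 0) := by
    apply Real.exp_le_exp.2
    nlinarith [Real.pi_gt_three]
  calc Real.exp (-(4 * Real.pi * y 0)) * DeltaL y ^ α ≤ Real.exp (- y 0) * (1 + y 0) ^ n := by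
        gcongr
        exact Real.rpow_nonneg (DeltaL_pos hy).le _
    _ = Real.exp (- y 0) * ((1 + y 0) ^ (n + 4) * (1 + y 0) ^ (-(4 : ℝ))) := by
        rw [Real.rpow_neg (by positivity)]
        norm_cast
        rw [pow_add]
        field_simp
    _ ≤ Real.exp (- y 0) * ((Real.exp (1 + y 0) * (n + 4).factorial) * (1 + ‖y‖) ^ (-(4 : ℝ))) := by
        gcongr
    _ = _ := by
        rw [hC, Real.exp_add]
        have : Real.exp (- y 0) * Real.exp (y 0) = 1 := by rw [← Real.exp_add]; simp
        linear_combination (Real.exp 1 * (n + 4).factorial * (1 + ‖y‖) ^ (-(4 : ℝ))) * this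

/-- the linear transformation of the cone attached to `ξ` -/
def BM (a c D : ℝ) : Matrix (Fin 3) (Fin 3) ℝ :=
  !![(a + c ^ 2 / a + D ^ 2 / a) / 2, (a - c ^ 2 / a - D ^ 2 / a) / 2, c;
     (a + c ^ 2 / a - D ^ 2 / a) / 2, (a - c ^ 2 / a + D ^ 2 / a) / 2, c;
     D * c / a, -(D * c / a), D]

theorem BM_det (a c D : ℝ) (ha : a ≠ 0) : (BM a c D).det = D ^ 3 := by
  rw [Matrix.det_fin_three]
  simp [BM]
  field_simp
  ring

theorem BM_apply (a c D : ℝ) (y : Fin 3 → ℝ) : (Matrix.toLin' (BM a c D)) y =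
   ![(a + c ^ 2 / a + D ^ 2 / a) / 2 * y 0 + (a - c ^ 2 / a - D ^ 2 / a) / 2 * y 1 + c * y 2,
     (a + c ^ 2 / a - D ^ 2 / a) / 2 * y 0 + (a - c ^ 2 / a + D ^ 2 / a) / 2 * y 1 + c * y 2,
     D * c / a * y 0 - (D * c / a) * y 1 + D * y 2] := by
  rw [Matrix.toLin'_apply]
  ext i
  fin_cases i <;> simp [BM, Matrix.mulVec, dotProduct, Fin.sum_univ_three] <;> ring

theorem mem_L3_iff (y : Fin 3 → ℝ) : y ∈ Lambda3 ↔ 0 < y 0 - y 1 ∧ 0 < DeltaL y := by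
  constructor
  · intro h
    exact ⟨(L3_pos h).2.2.1, h.2⟩
  · rintro ⟨h1, h2⟩
    refine ⟨?_, h2⟩
    by_contra hc
    simp only [DeltaL] at h2
    nlinarith [sq_nonneg (y 2)]

theorem KK_cone (α : ℝ) {ξ : Fin 3 → ℝ} (hξ : ξ ∈ Lambda3) :
    KK α ξ = KK α e0 * ENNReal.ofReal ((DeltaL ξ ^ (α + 3 / 2))⁻¹) := by
  obtain ⟨_, ha, hb, _⟩ := L3_pos hξ
  have hΔ := DeltaL_pos hξ
  set a := ξ 0 + ξ 1 with ha'
  set D := Real.sqrt (DeltaL ξ) with hD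
  have hD0 : 0 < D := Real.sqrt_pos.2 hΔ
  have hD2 : D ^ 2 = DeltaL ξ := Real.sq_sqrt hΔ.le
  set B := Matrix.toLin' (BM a (ξ 2) D) with hB
  have hdet : (BM a (ξ 2) D).det = D ^ 3 := BM_det _ _ _ ha.ne'
  have hBΔ : ∀ y, DeltaL (B y) = D ^ 2 * DeltaL y := by
    intro y
    rw [hB, BM_apply]
    simp only [DeltaL, Matrix.cons_val]
    field_simp
    ring
  have hBip : ∀ y, ip (B y) e0 = ip y ξ := by
    intro y
    rw [hB, BM_apply]
    have h4 : ξ 2 ^ 2 + D ^ 2 = a * (ξ 0 - ξ 1) := by rw [hD2, ha']; simp only [DeltaL]; ring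
    have h5 : (ξ 2 ^ 2 / a + D ^ 2 / a) = (ξ 0 - ξ 1) := by
      rw [← add_div, h4]; field_simp
    simp only [ip, e0, Matrix.cons_val]
    linear_combination (y 0 - y 1) / 2 * h5 + (y 0 + y 1) / 2 * ha'
  have hBm : ∀ y, B y ∈ Lambda3 ↔ y ∈ Lambda3 := by
    intro y
    rw [mem_L3_iff, mem_L3_iff, hBΔ]
    have h6 : (B y) 0 - (B y) 1 = D ^ 2 / a * (y 0 - y 1) := by
      rw [hB, BM_apply]
      simp only [Matrix.cons_val]
      ring
    rw [h6, mul_pos_iff_of_pos_left (by positivity), mul_pos_iff_of_pos_left (by positivity)]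
  have hKI : ∀ y, KI α e0 (B y) = ENNReal.ofReal (DeltaL ξ ^ α) * KI α ξ y := by
    intro y
    by_cases hy : y ∈ Lambda3
    · rw [KI, KI, indicator_of_mem hy, indicator_of_mem ((hBm y).2 hy), hBip, hBΔ, hD2,
        Real.mul_rpow hΔ.le (DeltaL_pos hy).le, ENNReal.ofReal_mul (by positivity)]
      ring
    · rw [KI, KI, indicator_of_notMem hy, indicator_of_notMem (mt (hBm y).1 hy), mul_zero]
  have h1 : ∫⁻ y, KI α e0 (B y) = ENNReal.ofReal ((D ^ 3)⁻¹) * KK α e0 := by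
    have hm : Measurable B := B.continuous_of_finiteDimensional.measurable
    rw [← lintegral_map (KI_meas α e0) hm, hB,
      Real.map_matrix_volume_pi_eq_smul_volume_pi (by rw [hdet]; positivity), lintegral_smul_measure,
      hdet, abs_of_pos (by positivity), KK_eq]
    rfl
  simp only [hKI] at h1
  rw [lintegral_const_mul' _ _ ENNReal.ofReal_ne_top, ← KK_eq] at h1
  have hp : 0 < DeltaL ξ ^ α := Real.rpow_pos_of_pos hΔ _
  have h2 : KK α ξ = ENNReal.ofReal ((DeltaL ξ ^ α)⁻¹) * (ENNReal.ofReal (DeltaL ξ ^ α) * KK α ξ) := by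
    rw [← mul_assoc, ← ENNReal.ofReal_mul (by positivity), inv_mul_cancel₀ hp.ne']
    simp
  rw [h2, h1, ← mul_assoc, ← ENNReal.ofReal_mul (by positivity), mul_comm]
  congr 2
  rw [← mul_inv, Real.rpow_add hΔ]
  congr 2
  rw [hD, Real.sqrt_eq_rpow, ← Real.rpow_mul_natCast hΔ.le]
  norm_num

theorem KK_meas (α : ℝ) : Measurable (KK α) := by
  unfold KK
  exact (KI_core_meas α).lintegral_prod_left' (μ := volume.restrict Lambda3)

theorem ip_add_right (y ξ η : Fin 3 → ℝ) : ip y (ξ + η) = ip y ξ + ip y η := by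
  simp [ip]; ring

theorem tonelli (g : (Fin 3 → ℝ) → ℂ) (hg : AEStronglyMeasurable g) (α : ℝ) (η : Fin 3 → ℝ) :
    ∫⁻ y in Lambda3, (∫⁻ ξ, ‖g ξ‖ₑ ^ 2 * ENNReal.ofReal (Real.exp (-(4 * Real.pi * ip y ξ)))) *
      (ENNReal.ofReal (Real.exp (-(4 * Real.pi * ip y η))) * ENNReal.ofReal (DeltaL y ^ α)) =
    ∫⁻ ξ, ‖g ξ‖ₑ ^ 2 * KK α (ξ + η) := by
  have e1 : ∀ y, (∫⁻ ξ, ‖g ξ‖ₑ ^ 2 * ENNReal.ofReal (Real.exp (-(4 * Real.pi * ip y ξ)))) *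
      (ENNReal.ofReal (Real.exp (-(4 * Real.pi * ip y η))) * ENNReal.ofReal (DeltaL y ^ α)) =
      ∫⁻ ξ, ‖g ξ‖ₑ ^ 2 * (ENNReal.ofReal (Real.exp (-(4 * Real.pi * ip y (ξ + η)))) *
        ENNReal.ofReal (DeltaL y ^ α)) := by
    intro y
    rw [← lintegral_mul_const' _ _ (ENNReal.mul_ne_top ENNReal.ofReal_ne_top ENNReal.ofReal_ne_top)]
    refine lintegral_congr fun ξ => ?_
    rw [ip_add_right, mul_add, neg_add, Real.exp_add, ENNReal.ofReal_mul (Real.exp_nonneg _)]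
    ring
  simp only [e1]
  rw [lintegral_lintegral_swap]
  · refine lintegral_congr fun ξ => ?_
    rw [lintegral_const_mul' _ _ (by simp)]
    rfl
  · have h1 : AEMeasurable (fun ξ => ‖g ξ‖ₑ ^ 2) volume := hg.enorm.pow_const 2
    have h2 : Measurable fun p : (Fin 3 → ℝ) × (Fin 3 → ℝ) => (p.1, p.2 + η) := by fun_prop
    have h3 : AEMeasurable (fun p : (Fin 3 → ℝ) × (Fin 3 → ℝ) => ‖g p.2‖ₑ ^ 2)
        ((volume.restrict Lambda3).prod volume) := h1.comp_snd
    have h4 : AEMeasurable (fun p : (Fin 3 → ℝ) × (Fin 3 → ℝ) =>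
        ENNReal.ofReal (Real.exp (-(4 * Real.pi * ip p.1 (p.2 + η)))) *
          ENNReal.ofReal (DeltaL p.1 ^ α)) ((volume.restrict Lambda3).prod volume) :=
      ((KI_core_meas α).comp h2).aemeasurable
    exact h3.mul h4

theorem supp_lemma (g : (Fin 3 → ℝ) → ℂ) (hg : AEStronglyMeasurable g) {α : ℝ} (hα : 0 ≤ α)
    (η : Fin 3 → ℝ) (h : ∫⁻ ξ, ‖g ξ‖ₑ ^ 2 * KK α (ξ + η) < ⊤) :
    ∀ᵐ ξ, ξ + η ∉ closure Lambda3 → g ξ = 0 := by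
  have hm : AEMeasurable (fun ξ => ‖g ξ‖ₑ ^ 2 * KK α (ξ + η)) volume := by
    refine (hg.enorm.pow_const 2).mul ?_
    have h2 : Measurable fun ξ : (Fin 3 → ℝ) => ξ + η := by fun_prop
    exact ((KK_meas α).comp h2).aemeasurable
  filter_upwards [ae_lt_top' hm h.ne] with ξ hξ hc
  rw [KK_top hα hc] at hξ
  by_contra h0
  rw [ENNReal.mul_top (by simpa using h0)] at hξ
  exact lt_irrefl _ hξ

theorem ae_frontier : ∀ᵐ ξ : Fin 3 → ℝ, ξ ∉ frontier Lambda3 :=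
  measure_eq_zero_iff_ae_notMem.1 (convex_L3.addHaar_frontier volume)

theorem mem_frontier_L3 {ξ : Fin 3 → ℝ} (h : ξ ∈ closure Lambda3) (h' : ξ ∉ Lambda3) :
    ξ ∈ frontier Lambda3 := by
  rw [frontier, isOpen_L3.interior_eq]
  exact ⟨h, h'⟩

theorem PW2 (G : (Fin 3 → ℂ) → ℂ) (hG : DifferentiableOn ℂ G TLambda3) (hB : LB G)
    (Hs : ∀ g : (Fin 3 → ℝ) → ℂ, AEStronglyMeasurable g →
      (∀ y ∈ Lambda3, NN G y = ∫⁻ ξ, ‖g ξ‖ₑ ^ 2 * ENNReal.ofReal (Real.exp (-(4 * Real.pi * ip y ξ)))) →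
      ∀ᵐ ξ, ξ ∉ closure Lambda3 → g ξ = 0) :
    ∃ g, Adm g ∧ EqOn G (ET g) TLambda3 := by
  obtain ⟨g, hgm, hg⟩ := PW G hG hB
  have h0 := Hs g hgm (by
    intro y hy
    rw [(hg y hy).2.1]
    refine lintegral_congr fun ξ => ?_
    rw [enorm_mul, mul_pow, enorm_rexp, ← ENNReal.ofReal_pow (Real.exp_nonneg _), ← Real.exp_nat_mul]
    congr 3
    push_cast; ring_nf)
  have hae : Lambda3.indicator g =ᵐ[volume] g := by
    filter_upwards [h0, ae_frontier] with ξ h1 h2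
    by_cases hξ : ξ ∈ Lambda3
    · rw [indicator_of_mem hξ]
    · rw [indicator_of_notMem hξ, h1 (fun hc => h2 (mem_frontier_L3 hc hξ))]
  have hadm : Adm (Lambda3.indicator g) := by
    refine ⟨fun ξ hξ => indicator_of_notMem hξ _, hgm.congr hae.symm, fun y hy => ?_⟩
    refine (memLp_congr_ae ?_).2 (hg y hy).1
    filter_upwards [hae] with ξ hξ
    rw [hξ]
  refine ⟨_, hadm, fun z hz => ?_⟩
  have hy : (fun i => (z i).im) ∈ Lambda3 := hz
  have hInt := E1_int hadm.meas (hadm.e1 hy)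
  have h3 := (hg _ hy).2.2 (hInt.congr (by filter_upwards [hae] with ξ hξ; rw [hξ])) (fun i => (z i).re)
  rw [← eq_tp z] at h3
  rw [h3]
  unfold ET
  refine integral_congr_ae ?_
  filter_upwards [hae] with ξ hξ
  rw [hξ]

theorem NN_congr {F H : (Fin 3 → ℂ) → ℂ} (h : EqOn F H TLambda3) {y : Fin 3 → ℝ} (hy : y ∈ Lambda3) :
    NN F y = NN H y := by
  unfold NN
  refine lintegral_congr fun x => ?_
  rw [h (tp_mem hy)]

theorem hardy_eq (F : (Fin 3 → ℂ) → ℂ) : hardyNormSq F = ⨆ y ∈ Lambda3, NN F y := rfl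

theorem hardy_congr {F H : (Fin 3 → ℂ) → ℂ} (h : EqOn F H TLambda3) :
    hardyNormSq F = hardyNormSq H := by
  rw [hardy_eq, hardy_eq]
  exact iSup_congr fun y => iSup_congr fun hy => NN_congr h hy

theorem berg_congr {F H : (Fin 3 → ℂ) → ℂ} (h : EqOn F H TLambda3) (ν : ℝ) :
    bergNormSqTube ν F = bergNormSqTube ν H := by
  rw [bergNorm_eq, bergNorm_eq]
  refine setLIntegral_congr_fun measurableSet_L3 fun y hy => ?_
  beta_reduce
  rw [NN_congr h hy]

theorem Adm.berg {g : (Fin 3 → ℝ) → ℂ} (h : Adm g) (ν : ℝ) :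
    bergNormSqTube ν (ET g) = ∫⁻ ξ, ‖g ξ‖ₑ ^ 2 * KK (ν - 3 / 2) ξ := by
  have := tonelli g h.meas (ν - 3 / 2) 0
  simp only [add_zero] at this
  rw [← this, bergNorm_eq]
  refine setLIntegral_congr_fun measurableSet_L3 fun y hy => ?_
  beta_reduce
  rw [h.NN hy]
  simp [ip]

theorem Adm.hardy {g : (Fin 3 → ℝ) → ℂ} (h : Adm g) : hardyNormSq (ET g) = ∫⁻ ξ, ‖g ξ‖ₑ ^ 2 := by
  have hpi := Real.pi_pos
  rw [hardy_eq]
  apply le_antisymm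
  · refine iSup₂_le fun y hy => ?_
    rw [h.NN hy]
    refine lintegral_mono fun ξ => ?_
    by_cases hξ : ξ ∈ Lambda3
    · refine mul_le_of_le_one_right zero_le ?_
      rw [ENNReal.ofReal_le_one, Real.exp_le_one_iff]
      have := ip_pos hy hξ
      have : 0 < 4 * Real.pi * ip y ξ := by positivity
      linarith
    · simp [h.supp ξ hξ]
  · have hlim := lintegral_tendsto_of_tendsto_of_monotone (μ := volume)
      (f := fun (n : ℕ) ξ => ‖g ξ‖ₑ ^ 2 *
        ENNReal.ofReal (Real.exp (-(4 * Real.pi * ip ((1 / ((n : ℝ) + 1)) • e0) ξ))))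
      (F := fun ξ => ‖g ξ‖ₑ ^ 2) ?_ ?_ ?_
    · refine le_of_tendsto' hlim fun n => ?_
      have hn : (1 / ((n : ℝ) + 1)) • e0 ∈ Lambda3 := L3_smul (by positivity) e0_mem
      rw [← h.NN hn]
      exact le_iSup₂ (f := fun (y : Fin 3 → ℝ) (_ : y ∈ Lambda3) => _root_.NN (ET g) y) _ hn
    · intro n
      refine (h.meas.enorm.pow_const 2).mul ?_
      have := ip_cont ((1 / ((n : ℝ) + 1)) • e0)
      exact Measurable.aemeasurable (by fun_prop)
    · filter_upwards with ξ
      by_cases hξ : ξ ∈ Lambda3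
      · intro n k hnk
        have h0 := (L3_pos hξ).1
        simp only [ip_smul, ip_e0]
        gcongr
      · simp [h.supp ξ hξ, monotone_const]
    · filter_upwards with ξ
      have h1 : Filter.Tendsto (fun n : ℕ => ENNReal.ofReal (Real.exp (-(4 * Real.pi *
          ip ((1 / ((n : ℝ) + 1)) • e0) ξ)))) Filter.atTop (nhds 1) := by
        simp only [ip_smul]
        have h2 := tendsto_one_div_add_atTop_nhds_zero_nat (𝕜 := ℝ)
        have h3 : Filter.Tendsto (fun n : ℕ => ENNReal.ofReal (Real.exp (-(4 * Real.pi *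
          ((1 / ((n : ℝ) + 1)) * ip e0 ξ))))) Filter.atTop
            (nhds (ENNReal.ofReal (Real.exp (-(4 * Real.pi * (0 * ip e0 ξ)))))) := by
          refine ENNReal.tendsto_ofReal ?_
          refine (Real.continuous_exp.tendsto _).comp ?_
          exact ((h2.mul_const _).const_mul _).neg
        simpa using h3
      have := ENNReal.Tendsto.const_mul (a := ‖g ξ‖ₑ ^ 2) h1 (Or.inl one_ne_zero)
      simpa using this

theorem weight_eq {f : (Fin 3 → ℝ) → ℂ} (hs : ∀ ξ, ξ ∉ Lambda3 → f ξ = 0)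
    (hf : AEStronglyMeasurable f) (m : ℕ) :
    ∫⁻ ξ, ‖(((4 * Real.pi ^ 2 * DeltaL ξ) ^ m : ℝ) : ℂ) * f ξ‖ₑ ^ 2 * KK (2 * m - 3 / 2) ξ =
      (ENNReal.ofReal ((4 * Real.pi ^ 2) ^ (2 * m)) * KK (2 * m - 3 / 2) e0) * ∫⁻ ξ, ‖f ξ‖ₑ ^ 2 := by
  rw [← lintegral_const_mul'' _ (hf.enorm.pow_const 2)]
  refine lintegral_congr fun ξ => ?_
  by_cases hξ : ξ ∈ Lambda3
  · have hΔ := DeltaL_pos hξ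
    have hp : 0 < 4 * Real.pi ^ 2 * DeltaL ξ := by have := Real.pi_pos; positivity
    rw [KK_cone _ hξ, enorm_mul, mul_pow, ← ofReal_norm, Complex.norm_real,
      Real.norm_of_nonneg (by positivity), ← ENNReal.ofReal_pow (by positivity)]
    have e : ENNReal.ofReal (((4 * Real.pi ^ 2 * DeltaL ξ) ^ m) ^ 2) *
        ENNReal.ofReal ((DeltaL ξ ^ ((2 * m - 3 / 2 : ℝ) + 3 / 2))⁻¹) =
        ENNReal.ofReal ((4 * Real.pi ^ 2) ^ (2 * m)) := by
      rw [← ENNReal.ofReal_mul (by positivity)]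
      congr 1
      rw [sub_add_cancel, show (2 * m : ℝ) = ((2 * m : ℕ) : ℝ) by push_cast; ring, Real.rpow_natCast,
        ← pow_mul, mul_comm m 2, mul_pow]
      field_simp
    rw [← e]
    ring
  · simp [hs ξ hξ]

theorem hardy_rep {F : (Fin 3 → ℂ) → ℂ} (hF : DifferentiableOn ℂ F TLambda3)
    (h : hardyNormSq F < ⊤) : ∃ g, Adm g ∧ EqOn F (ET g) TLambda3 := by
  refine PW2 F hF (LB_hardy F h) fun g hg hN => ?_
  have key : ∀ n : ℕ, ∀ᵐ ξ, ξ + (1 / ((n : ℝ) + 1)) • e0 ∉ closure Lambda3 → g ξ = 0 := by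
    intro n
    have hη : (1 / ((n : ℝ) + 1)) • e0 ∈ Lambda3 := L3_smul (by positivity) e0_mem
    refine supp_lemma g hg (α := 1) zero_le_one _ ?_
    rw [← tonelli g hg]
    have hb : hardyNormSq F * KK 1 ((1 / ((n : ℝ) + 1)) • e0) < ⊤ := by
      refine ENNReal.mul_lt_top h ?_
      rw [KK_cone _ hη]
      exact ENNReal.mul_lt_top (KK_e0_lt 2 zero_le_one (by norm_num)) ENNReal.ofReal_lt_top
    refine lt_of_le_of_lt ?_ hb
    unfold KK
    rw [← lintegral_const_mul' _ _ h.ne]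
    refine setLIntegral_mono' measurableSet_L3 fun y hy => ?_
    rw [← hN y hy]
    gcongr
    rw [hardy_eq]
    exact le_iSup₂ (f := fun (y : Fin 3 → ℝ) (_ : y ∈ Lambda3) => NN F y) _ hy
  filter_upwards [ae_all_iff.2 key] with ξ hξ hc
  have hl : Filter.Tendsto (fun n : ℕ => ξ + (1 / ((n : ℝ) + 1)) • e0) Filter.atTop (nhds ξ) := by
    have h2 := tendsto_one_div_add_atTop_nhds_zero_nat (𝕜 := ℝ)
    simpa using (h2.smul_const e0).const_add ξ
  obtain ⟨n, hn⟩ := (hl.eventually (isClosed_closure.isOpen_compl.mem_nhds hc)).exists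
  exact hξ n hn

theorem berg_rep {G : (Fin 3 → ℂ) → ℂ} {ν : ℝ} (hν : 0 ≤ ν - 3 / 2) (hG : DifferentiableOn ℂ G TLambda3)
    (h : bergNormSqTube ν G < ⊤) : ∃ g, Adm g ∧ EqOn G (ET g) TLambda3 := by
  refine PW2 G hG (LB_berg ν G hG h) fun g hg hN => ?_
  have := supp_lemma g hg hν 0 ?_
  · simpa using this
  · rw [← tonelli g hg]
    refine lt_of_le_of_lt (le_of_eq ?_) h
    rw [bergNorm_eq]
    refine setLIntegral_congr_fun measurableSet_L3 fun y hy => ?_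
    simp only [hN y hy]
    simp [ip]

theorem Adm_of_l2 {f : (Fin 3 → ℝ) → ℂ} (hs : ∀ ξ, ξ ∉ Lambda3 → f ξ = 0)
    (hf : AEStronglyMeasurable f) (h : ∫⁻ ξ, ‖f ξ‖ₑ ^ 2 < ⊤) : Adm f := by
  have hL : MemLp f 2 := by
    refine ⟨hf, ?_⟩
    rw [eLpNorm_lt_top_iff_lintegral_rpow_enorm_lt_top two_ne_zero ENNReal.ofNat_ne_top]
    simpa using h
  refine ⟨hs, hf, fun y hy => ?_⟩
  refine hL.of_le ?_ ?_
  · have := ip_cont y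
    refine hf.mul (Continuous.aestronglyMeasurable ?_)
    fun_prop
  · filter_upwards with ξ
    by_cases hξ : ξ ∈ Lambda3
    · rw [norm_mul]
      refine mul_le_of_le_one_right (norm_nonneg _) ?_
      rw [Complex.norm_real, Real.norm_of_nonneg (Real.exp_nonneg _), Real.exp_le_one_iff]
      have h1 := ip_pos hy hξ
      have h2 := Real.pi_pos
      have : 0 < 2 * Real.pi * ip y ξ := by positivity
      linarith
    · simp [hs ξ hξ]

/-- for `m ≥ 1`, `□^m` is a bounded isomorphism of `H²(T_{Λ₃})` onto
`A²_{2m}(T_{Λ₃})`: `‖□^m F‖²_{A²_{2m}} = c_m ‖F‖²_{H²}` for all `F ∈ H²`, and every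
`G ∈ A²_{2m}` is a constant multiple of `□^m F` for some `F ∈ H²`. -/
theorem box_isomorphism_hardy_bergman (m : ℕ) (hm : 1 ≤ m) :
    ∃ c : ℝ, 0 < c ∧
      (∀ F : (Fin 3 → ℂ) → ℂ, DifferentiableOn ℂ F TLambda3 → hardyNormSq F < ⊤ →
        DifferentiableOn ℂ (Box^[m] F) TLambda3 ∧
        bergNormSqTube (2 * m) (Box^[m] F) = ENNReal.ofReal c * hardyNormSq F) ∧
      (∀ G : (Fin 3 → ℂ) → ℂ, DifferentiableOn ℂ G TLambda3 →
        bergNormSqTube (2 * m) G < ⊤ →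
        ∃ F : (Fin 3 → ℂ) → ℂ, DifferentiableOn ℂ F TLambda3 ∧ hardyNormSq F < ⊤ ∧
          ∃ a : ℂ, a ≠ 0 ∧ ∀ z ∈ TLambda3, G z = a * Box^[m] F z) := by
  have hm' : (1 : ℝ) ≤ m := by exact_mod_cast hm
  have hα : (0 : ℝ) ≤ 2 * m - 3 / 2 := by linarith
  have hpi := Real.pi_pos
  set C : ℝ≥0∞ := ENNReal.ofReal ((4 * Real.pi ^ 2) ^ (2 * m)) * KK (2 * m - 3 / 2) e0 with hC
  have hC0 : C ≠ 0 := by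
    refine mul_ne_zero ?_ (KK_pos _ _).ne'
    simp only [ne_eq, ENNReal.ofReal_eq_zero, not_le]
    positivity
  have hCt : C ≠ ⊤ := by
    refine ENNReal.mul_ne_top ENNReal.ofReal_ne_top (KK_e0_lt (4 * m) hα ?_).ne
    push_cast; linarith
  refine ⟨C.toReal, ENNReal.toReal_pos hC0 hCt, ?_, ?_⟩
  · intro F hF hh
    obtain ⟨g, hg, hE⟩ := hardy_rep hF hh
    obtain ⟨h1, h2⟩ := hg.box_iter m
    have h3 := h2 F hE
    refine ⟨h1.diff.congr h3, ?_⟩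
    rw [berg_congr h3, h1.berg, weight_eq hg.supp hg.meas, ENNReal.ofReal_toReal hCt, hardy_congr hE,
      hg.hardy]
  · intro G hG hh
    obtain ⟨g, hg, hE⟩ := berg_rep hα hG hh
    set f : (Fin 3 → ℝ) → ℂ := fun ξ => (((4 * Real.pi ^ 2 * DeltaL ξ) ^ m : ℝ) : ℂ)⁻¹ * g ξ with hf
    have hgf : (fun ξ => (((4 * Real.pi ^ 2 * DeltaL ξ) ^ m : ℝ) : ℂ) * f ξ) = g := by
      funext ξ
      by_cases hξ : ξ ∈ Lambda3
      · have hΔ := DeltaL_pos hξ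
        have hp : ((4 * Real.pi ^ 2 * DeltaL ξ) ^ m : ℝ) ≠ 0 := by positivity
        rw [hf]
        exact mul_inv_cancel_left₀ (Complex.ofReal_ne_zero.2 hp) _
      · simp [hf, hg.supp ξ hξ]
    have hfs : ∀ ξ, ξ ∉ Lambda3 → f ξ = 0 := fun ξ hξ => by simp [hf, hg.supp ξ hξ]
    have hfm : AEStronglyMeasurable f := by
      have := DeltaL_cont.measurable
      refine AEStronglyMeasurable.mul ?_ hg.meas
      exact Measurable.aestronglyMeasurable (by fun_prop)
    have hw := weight_eq hfs hfm m
    have e : ∀ ξ, (((4 * Real.pi ^ 2 * DeltaL ξ) ^ m : ℝ) : ℂ) * f ξ = g ξ := fun ξ => congrFun hgf ξ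
    simp only [e] at hw
    rw [← hg.berg, ← berg_congr hE] at hw
    have hfin : ∫⁻ ξ, ‖f ξ‖ₑ ^ 2 < ⊤ := by
      by_contra hc
      rw [not_lt_top_iff] at hc
      rw [hc, ENNReal.mul_top hC0] at hw
      exact hh.ne hw
    have hA := Adm_of_l2 hfs hfm hfin
    refine ⟨ET f, hA.diff, by rw [hA.hardy]; exact hfin, 1, one_ne_zero, fun z hz => ?_⟩
    have h2 := (hA.box_iter m).2 (ET f) (fun _ _ => rfl) hz
    rw [hgf] at h2
    rw [one_mul, h2, hE hz]
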